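/- arXiv:2511.08099 — 10 statements merged into one kernel-verified Lean document; each statement's English description precedes it below -/
import Mathlib

section
/- Let k ∈ {7, 8, 10, 11, 12, 13}, let (r₁, a₁) = (16,6), (6,2), (38,12), (20,6), (4,1), (11,3) for k = 7, 8, 10, 11, 12, 13 respectively, and for p ≥ 1 define positive integers r_p, a_p by (r_p + a_p√k)/2 = ((r₁ + a₁√k)/2)^p. Then gcd(a_p, r_p) = 2 if k ∈ {7, 8, 10, 11}; for k = 12, gcd(a_p, r_p) = 2 if p is even and 1 if p is odd; for k = 13, gcd(a_p, r_p) = 2 if 3 divides p and 1 otherwise. -/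
/-!
Write `S` and `C` for the rescaled Chebyshev polynomials. If `r₁² - k a₁² = 4`, then
`u = (r₁ + a₁√k)/2` has trace `r₁` and norm `1`, so `u² = r₁ u - 1` and the powers of `u` are
governed by the recurrence of `S`: they give `r_p = C_p(r₁)` and `a_p = a₁ S_{p-1}(r₁)`.
Since `r_p² - k a_p² = 4`, the gcd divides `2`, and it is `2` exactly when `a_p` is even.
Modulo `2` the recurrence for `S_{p-1}(r₁)` has period `2` when `r₁` is even and is the Fibonacci
recurrence, of period `3`, when `r₁` is odd.
-/

theorem even_of_sq_sub_mul_sq_eq_four {k r a : ℤ} (h : r ^ 2 - k * a ^ 2 = 4) (ha : Even a) :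
    Even r := by
  have hr_sq : Even (r ^ 2) := by
    rw [sub_eq_iff_eq_add.mp h]
    exact (by decide : Even (4 : ℤ)).add ((ha.pow_of_ne_zero two_ne_zero).mul_left k)
  exact (Int.even_pow.mp hr_sq).1

theorem gcd_eq_ite_of_sq_sub_mul_sq_eq_four {k r a : ℤ} (h : r ^ 2 - k * a ^ 2 = 4) :
    Int.gcd a r = if Even a then 2 else 1 := by
  have hdvd : Int.gcd a r ∣ 2 := by
    have hsq : (Int.gcd a r : ℤ) ^ 2 ∣ 2 ^ 2 := by
      rw [show (2 : ℤ) ^ 2 = r ^ 2 - k * a ^ 2 by rw [h]; norm_num]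
      exact dvd_sub (pow_dvd_pow_of_dvd (Int.gcd_dvd_right ..) 2)
        ((pow_dvd_pow_of_dvd (Int.gcd_dvd_left ..) 2).mul_left k)
    exact_mod_cast (Int.pow_dvd_pow_iff two_ne_zero).mp hsq
  split_ifs with ha
  · have hr : Even r := even_of_sq_sub_mul_sq_eq_four h ha
    exact Nat.dvd_antisymm hdvd (by exact_mod_cast Int.dvd_coe_gcd ha.two_dvd hr.two_dvd)
  · refine ((Nat.dvd_prime Nat.prime_two).mp hdvd).resolve_right fun hgcd ↦ ha ?_
    have hga := Int.gcd_dvd_left a r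
    rw [hgcd] at hga
    exact even_iff_two_dvd.mpr hga

section Chebyshev

open Polynomial (X eval eval_X eval_mul eval_ofNat eval_pow eval_sub)
open Polynomial.Chebyshev

theorem chebyshev_C_sq_sub_mul_S_sq (R : Type*) [CommRing R] (n : ℤ) :
    C R n ^ 2 - (X ^ 2 - 4) * S R (n - 1) ^ 2 = 4 := by
  have hS := S_sq_add_S_sq R (n - 1)
  rw [sub_add_cancel] at hS
  rw [C_eq_S_sub_X_mul_S]
  linear_combination 4 * hS

theorem pow_eq_eval_chebyshev_S_smul_sub {R A : Type*} [CommRing R] [Ring A] [Algebra R A]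
    {t : R} {u : A} (hu : u ^ 2 = t • u - 1) (n : ℕ) :
    u ^ n = eval t (S R (n - 1)) • u - eval t (S R (n - 2)) • 1 := by
  induction n with
  | zero => simp
  | succ n ih =>
    have hS : eval t (S R n) = t * eval t (S R (n - 1)) - eval t (S R (n - 2)) := by
      simp [S_eq R n]
    calc u ^ (n + 1)
        = eval t (S R (n - 1)) • u ^ 2 - eval t (S R (n - 2)) • u := by
          rw [pow_succ, ih, sub_mul, smul_mul_assoc, smul_mul_assoc, one_mul, sq]
      _ = eval t (S R n) • u - eval t (S R (n - 1)) • 1 := by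
          rw [hu, hS]; module
      _ = _ := by
          rw [Nat.cast_succ, add_sub_cancel_right, show (n : ℤ) + 1 - 2 = n - 1 by ring]

theorem even_eval_chebyshev_S_iff_of_even {r : ℤ} (hr : Even r) (n : ℤ) :
    Even (eval r (S ℤ n)) ↔ Odd n := by
  induction n using Polynomial.Chebyshev.induct with
  | zero => simp
  | one => simp [hr]
  | add_two n _ ih => simp [Int.even_sub, hr, ih]
  | neg_add_one n _ ih =>
    simp only [S_sub_one, eval_sub, eval_mul, eval_X, Int.even_sub, hr.mul_right, ih, true_iff]
    grind

theorem even_eval_chebyshev_S_iff_of_odd {r : ℤ} (hr : Odd r) (n : ℤ) :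
    Even (eval r (S ℤ n)) ↔ 3 ∣ n + 1 := by
  have hr' : ¬ Even r := Int.not_even_iff_odd.mpr hr
  induction n using Polynomial.Chebyshev.induct with
  | zero => simp
  | one => simp [hr']
  | add_two n ih₁ ih₀ =>
    simp only [S_add_two, eval_sub, eval_mul, eval_X, Int.even_sub, Int.even_mul, hr',
      false_or, ih₁, ih₀]
    omega
  | neg_add_one n ih₀ ih₁ =>
    simp only [S_sub_one, eval_sub, eval_mul, eval_X, Int.even_sub, Int.even_mul, hr',
      false_or, ih₁, ih₀]
    omega

theorem eq_eval_chebyshev_of_half_add_mul_sqrt_eq_pow {k r₁ a₁ r a : ℤ} {p : ℕ} (hk₀ : 0 ≤ k)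
    (hk : ¬ IsSquare k) (h₁ : r₁ ^ 2 - k * a₁ ^ 2 = 4)
    (hpow : ((r : ℝ) + a * √(k : ℝ)) / 2 = ((r₁ + a₁ * √(k : ℝ)) / 2) ^ p) :
    r = eval r₁ (C ℤ p) ∧ a = a₁ * eval r₁ (S ℤ (p - 1)) := by
  have hsqrt : √(k : ℝ) ^ 2 = k := Real.sq_sqrt (by exact_mod_cast hk₀)
  have h₁' : (r₁ : ℝ) ^ 2 - k * a₁ ^ 2 = 4 := by exact_mod_cast h₁
  have hquad : (((r₁ : ℝ) + a₁ * √(k : ℝ)) / 2) ^ 2 = r₁ • ((r₁ + a₁ * √(k : ℝ)) / 2) - 1 := by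
    rw [zsmul_eq_mul]
    linear_combination a₁ ^ 2 / 4 * hsqrt - h₁' / 4
  have hC : eval r₁ (C ℤ p) = r₁ * eval r₁ (S ℤ (p - 1)) - 2 * eval r₁ (S ℤ (p - 2)) := by
    rw [C_eq_S_sub_X_mul_S, S_eq ℤ p]
    simp only [eval_sub, eval_mul, eval_X, eval_ofNat]
    ring
  have hpair : (⟨r, a⟩ : ℤ√k) = ⟨eval r₁ (C ℤ p), a₁ * eval r₁ (S ℤ (p - 1))⟩ := by
    refine Zsqrtd.toReal_injective hk₀ (fun n hn ↦ hk ⟨n, hn⟩) ?_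
    rw [pow_eq_eval_chebyshev_S_smul_sub hquad] at hpow
    simp only [zsmul_eq_mul, mul_one] at hpow
    simp only [Zsqrtd.toReal_apply, hC]
    push_cast
    linear_combination 2 * hpow
  exact Zsqrtd.ext_iff.mp hpair

theorem gcd_of_pell_solutions_general {k r₁ a₁ r a : ℤ} {p : ℕ} (hk₀ : 0 ≤ k)
    (hk : ¬ IsSquare k) (h₁ : r₁ ^ 2 - k * a₁ ^ 2 = 4)
    (hpow : ((r : ℝ) + a * √(k : ℝ)) / 2 = ((r₁ + a₁ * √(k : ℝ)) / 2) ^ p) :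
    (Even a₁ → Int.gcd a r = 2) ∧
    (Odd a₁ → Even r₁ → Int.gcd a r = if Even p then 2 else 1) ∧
    (Odd r₁ → Int.gcd a r = if 3 ∣ p then 2 else 1) := by
  obtain ⟨hr, ha⟩ := eq_eval_chebyshev_of_half_add_mul_sqrt_eq_pow hk₀ hk h₁ hpow
  have hnorm : r ^ 2 - k * a ^ 2 = 4 := by
    have hCS := congrArg (eval r₁) (chebyshev_C_sq_sub_mul_S_sq ℤ p)
    simp only [eval_sub, eval_mul, eval_pow, eval_X, eval_ofNat] at hCS
    rw [hr, ha]
    linear_combination hCS + eval r₁ (S ℤ (p - 1)) ^ 2 * h₁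
  rw [gcd_eq_ite_of_sq_sub_mul_sq_eq_four hnorm]
  have heven : Even a ↔ Even a₁ ∨ Even (eval r₁ (S ℤ (p - 1))) := by rw [ha, Int.even_mul]
  refine ⟨fun ha₁ ↦ ?_, fun ha₁ hr₁ ↦ ?_, fun hr₁ ↦ ?_⟩
  · simp only [heven, ha₁, true_or, if_true]
  · have hp : Odd ((p : ℤ) - 1) ↔ Even p := by grind
    simp only [heven, Int.not_even_iff_odd.mpr ha₁, false_or,
      even_eval_chebyshev_S_iff_of_even hr₁, hp]
  · have ha₁ : ¬ Even a₁ :=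
      fun ha₁ ↦ Int.not_even_iff_odd.mpr hr₁ (even_of_sq_sub_mul_sq_eq_four h₁ ha₁)
    have hp : 3 ∣ (p : ℤ) - 1 + 1 ↔ 3 ∣ p := by omega
    simp only [heven, ha₁, false_or, even_eval_chebyshev_S_iff_of_odd hr₁, hp]

end Chebyshev

/-- For `k ∈ {7,8,10,11,12,13}` and solutions `(r_p, a_p)` of `r² − k·a² = 4` generated by the
fundamental solution `(r₁, a₁)` via `(r_p + a_p√k)/2 = ((r₁ + a₁√k)/2)^p`, the value of
`gcd(a_p, r_p)` is: `2` for `k ∈ {7,8,10,11}`; for `k = 12`, `2` if `p` is even and `1` if `p`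
is odd; for `k = 13`, `2` if `3 ∣ p` and `1` otherwise. -/
theorem gcd_of_pell_solutions
    (k r₁ a₁ : ℤ)
    (hk : (k, r₁, a₁) ∈
      ({(7, 16, 6), (8, 6, 2), (10, 38, 12), (11, 20, 6), (12, 4, 1), (13, 11, 3)} :
        Set (ℤ × ℤ × ℤ)))
    (rseq aseq : ℕ → ℤ)
    (hident : ∀ p : ℕ, 1 ≤ p →
      ((rseq p : ℝ) + (aseq p : ℝ) * Real.sqrt (k : ℝ)) / 2 =
        (((r₁ : ℝ) + (a₁ : ℝ) * Real.sqrt (k : ℝ)) / 2) ^ p)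
    (p : ℕ) (hp : 1 ≤ p) :
    ((k = 7 ∨ k = 8 ∨ k = 10 ∨ k = 11) → Int.gcd (aseq p) (rseq p) = 2) ∧
    (k = 12 → ((Even p → Int.gcd (aseq p) (rseq p) = 2) ∧
               (¬ Even p → Int.gcd (aseq p) (rseq p) = 1))) ∧
    (k = 13 → ((3 ∣ p → Int.gcd (aseq p) (rseq p) = 2) ∧
               (¬ 3 ∣ p → Int.gcd (aseq p) (rseq p) = 1))) := by
  simp only [Set.mem_insert_iff, Set.mem_singleton_iff, Prod.mk.injEq] at hk
  rcases hk with ⟨rfl, rfl, rfl⟩ | ⟨rfl, rfl, rfl⟩ | ⟨rfl, rfl, rfl⟩ | ⟨rfl, rfl, rfl⟩ |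
    ⟨rfl, rfl, rfl⟩ | ⟨rfl, rfl, rfl⟩
  all_goals
    obtain ⟨gcd_even, gcd_odd_even, gcd_odd⟩ :=
      gcd_of_pell_solutions_general (by norm_num) (by norm_num) (by norm_num) (hident p hp)
  iterate 4 simp [gcd_even (by decide)]
  · simp +contextual [gcd_odd_even (by decide) (by decide)]
  · simp +contextual [gcd_odd (by decide)]
end

section
/- Let {a, b} be a D(4)-pair with a < b and ab + 4 = r² (r a positive integer), let ε ∈ {+1, −1}, and assume b > a + 4 in the case ε = −1. Then for every integer ν ≥ 1: a divides s_ν² − 4, b divides t_ν² − 4, (s_ν² − 4)/a = (t_ν² − 4)/b, and c_ν^ε := (s_ν² − 4)/a is a positive integer such that a·c_ν^ε + 4 = s_ν² and b·c_ν^ε + 4 = t_ν² are perfect squares. -/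
/-!
With the Lucas sequences `U_ν = S_{ν-1}(r)` and `V_ν = C_ν(r)`, given by rescaled Chebyshev
polynomials, the two sequences are `s_ν = V_ν + ε a U_ν` and `t_ν = ε V_ν + b U_ν`. The Pell
identity `V² = (r² - 4) U² + 4 = a b U² + 4` then gives `s² - 4 = a c` and `t² - 4 = b c` for the
same `c = U ((a + b) U + 2 ε V)`. If `ε = 1`, positivity of `c` is immediate. If `ε = -1`, it
follows from `((a + b) U)² - (2 V)² = (b - a)² U² - 16`, which is positive once `b > a + 4`.
-/

section Lucas

open Polynomial (eval X)
open Polynomial.Chebyshev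

section CommRing

variable {R : Type*} [CommRing R]

theorem chebyshev_C_sq (n : ℤ) : C R n ^ 2 = (X ^ 2 - 4) * S R (n - 1) ^ 2 + 4 := by
  have hS := S_sq_add_S_sq R (n - 1)
  rw [sub_add_cancel] at hS
  rw [C_eq_S_sub_X_mul_S]
  linear_combination 4 * hS

theorem eval_chebyshev_C_sq (r : R) (n : ℤ) :
    (C R n).eval r ^ 2 = (r ^ 2 - 4) * (S R (n - 1)).eval r ^ 2 + 4 := by
  simpa using congrArg (eval r) (chebyshev_C_sq (R := R) n)

theorem eq_mul_eval_C_add_mul_eval_S_of_recurrence {u : ℕ → R} {r x y : R} (hu0 : u 0 = 2 * x)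
    (hu1 : u 1 = x * r + y) (hu : ∀ n, u (n + 2) = r * u (n + 1) - u n) (n : ℕ) :
    u n = x * (C R n).eval r + y * (S R (n - 1)).eval r := by
  induction n using Nat.twoStepInduction with
  | zero => simp [hu0, mul_comm]
  | one => simp [hu1]
  | more n ih ih' =>
    have hC : (C R ↑(n + 2)).eval r = r * (C R ↑(n + 1)).eval r - (C R n).eval r := by
      simp [C_add_two]
    have hS : (S R (↑(n + 2) - 1)).eval r =
        r * (S R (↑(n + 1) - 1)).eval r - (S R (n - 1)).eval r := by
      rw [S_eq, show ((n + 2 : ℕ) : ℤ) - 1 - 1 = (n + 1 : ℕ) - 1 by lia,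
        show ((n + 2 : ℕ) : ℤ) - 1 - 2 = n - 1 by lia]
      simp
    rw [hu, ih, ih', hC, hS]
    ring

/-- The closed form `U ((a + b) U + 2 ε V)` of the extension `c_n^ε` of the `D(4)`-pair `{a, b}`
with `a b + 4 = r²`, where `U = S_{n-1}(r)` and `V = C_n(r)`; it involves no division by `a`. -/
noncomputable def d4Extension (a b r ε : R) (n : ℤ) : R :=
  (S R (n - 1)).eval r * ((a + b) * (S R (n - 1)).eval r + 2 * ε * (C R n).eval r)

variable {a b r ε : R}

theorem sq_eval_C_add_eq_mul_d4Extension (hr : a * b + 4 = r ^ 2) (hε : ε ^ 2 = 1) (n : ℤ) :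
    ((C R n).eval r + ε * a * (S R (n - 1)).eval r) ^ 2 = a * d4Extension a b r ε n + 4 := by
  rw [d4Extension]
  linear_combination eval_chebyshev_C_sq r n - (S R (n - 1)).eval r ^ 2 * hr +
    a ^ 2 * (S R (n - 1)).eval r ^ 2 * hε

theorem sq_mul_eval_C_add_eq_mul_d4Extension (hr : a * b + 4 = r ^ 2) (hε : ε ^ 2 = 1) (n : ℤ) :
    (ε * (C R n).eval r + b * (S R (n - 1)).eval r) ^ 2 = b * d4Extension a b r ε n + 4 := by
  rw [d4Extension]
  linear_combination eval_chebyshev_C_sq r n - (S R (n - 1)).eval r ^ 2 * hr +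
    (C R n).eval r ^ 2 * hε

end CommRing

section Ordered

variable {R : Type*} [CommRing R] [LinearOrder R] [IsStrictOrderedRing R]

theorem monotone_of_recurrence {u : ℕ → R} {r : R} (hr : 2 ≤ r) (hu0 : 0 ≤ u 0) (hu1 : u 0 ≤ u 1)
    (hu : ∀ n, u (n + 2) = r * u (n + 1) - u n) : Monotone u := by
  have h : ∀ n, 0 ≤ u n ∧ u n ≤ u (n + 1) := by
    intro n
    induction n with
    | zero => exact ⟨hu0, hu1⟩
    | succ n ih =>
      have hpos : 0 ≤ u (n + 1) := ih.1.trans ih.2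
      refine ⟨hpos, ?_⟩
      rw [hu]
      linarith [mul_le_mul_of_nonneg_right hr hpos, ih.2]
  exact monotone_nat_of_le_succ fun n => (h n).2

theorem one_le_eval_chebyshev_S {r : R} (hr : 2 ≤ r) {n : ℤ} (hn : 0 ≤ n) :
    1 ≤ (S R n).eval r := by
  lift n to ℕ using hn
  have hmono : Monotone fun k : ℕ => (S R k).eval r :=
    monotone_of_recurrence hr (by simp) (by simpa using one_le_two.trans hr)
      fun k => by simp [S_add_two]
  simpa using hmono n.zero_le

theorem two_le_eval_chebyshev_C {r : R} (hr : 2 ≤ r) (n : ℤ) : 2 ≤ (C R n).eval r := by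
  have hmono : Monotone fun k : ℕ => (C R k).eval r :=
    monotone_of_recurrence hr (by simp) (by simpa using hr) fun k => by simp [C_add_two]
  rw [← C_natAbs]
  simpa only [Nat.cast_zero, C_zero, Polynomial.eval_ofNat] using hmono n.natAbs.zero_le

variable {a b r : R} {n : ℤ}

theorem d4Extension_one_pos (ha : 0 < a) (hb : 0 < b) (hr : 2 ≤ r) (hn : 1 ≤ n) :
    0 < d4Extension a b r 1 n := by
  have hU : 1 ≤ (S R (n - 1)).eval r := one_le_eval_chebyshev_S hr (by lia)
  have hV : 2 ≤ (C R n).eval r := two_le_eval_chebyshev_C hr n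
  rw [d4Extension]
  positivity

theorem d4Extension_neg_one_pos (ha : 0 < a) (hab : a + 4 < b) (hr : 2 ≤ r)
    (hr2 : a * b + 4 = r ^ 2) (hn : 1 ≤ n) : 0 < d4Extension a b r (-1) n := by
  rw [d4Extension]
  set U := (S R (n - 1)).eval r
  set V := (C R n).eval r
  have hU : 1 ≤ U := one_le_eval_chebyshev_S hr (by lia)
  have hb : 0 < b := by linarith
  have hdiff : 4 < (b - a) * U :=
    (lt_sub_iff_add_lt'.mpr hab).trans_le (le_mul_of_one_le_right (by linarith) hU)
  have hsq : (2 * V) ^ 2 < ((a + b) * U) ^ 2 := by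
    have hpell : V ^ 2 = (r ^ 2 - 4) * U ^ 2 + 4 := eval_chebyshev_C_sq r n
    calc (2 * V) ^ 2 = ((a + b) * U) ^ 2 - (((b - a) * U) ^ 2 - 4 ^ 2) := by
          linear_combination 4 * hpell - 4 * U ^ 2 * hr2
      _ < ((a + b) * U) ^ 2 := by
          linarith [pow_lt_pow_left₀ hdiff (by norm_num) two_ne_zero]
  have hlt : 2 * V < (a + b) * U := lt_of_pow_lt_pow_left₀ 2 (by positivity) hsq
  exact mul_pos (by linarith) (by linarith)

end Ordered

end Lucas

/-- Let `{a, b}` be a `D(4)`-pair with `a < b`, `a*b + 4 = r²`, let `ε ∈ {1, −1}` and assume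
`b > a + 4` in the case `ε = −1`. With sequences `s_ν`, `t_ν` as in the paper, for every
`ν ≥ 1`: `a ∣ s_ν² − 4`, `b ∣ t_ν² − 4`, `(s_ν² − 4)/a = (t_ν² − 4)/b`, and
`c_ν^ε = (s_ν² − 4)/a` is a positive integer with `a*c_ν^ε + 4 = s_ν²` and
`b*c_ν^ε + 4 = t_ν²` perfect squares. -/
theorem c_nu_is_positive_integer_extension
    (a b r : ℤ) (ha : 0 < a) (hab : a < b) (hr : 0 < r) (hr2 : a * b + 4 = r ^ 2)
    (ε : ℤ) (hε : ε = 1 ∨ ε = -1) (hbig : ε = -1 → a + 4 < b)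
    (s t : ℕ → ℤ)
    (hs0 : s 0 = 2) (hs1 : s 1 = r + ε * a)
    (hsrec : ∀ ν : ℕ, s (ν + 2) = r * s (ν + 1) - s ν)
    (ht0 : t 0 = 2 * ε) (ht1 : t 1 = b + ε * r)
    (htrec : ∀ ν : ℕ, t (ν + 2) = r * t (ν + 1) - t ν) :
    ∀ ν : ℕ, 1 ≤ ν →
      a ∣ (s ν) ^ 2 - 4 ∧
      b ∣ (t ν) ^ 2 - 4 ∧
      ((s ν) ^ 2 - 4) / a = ((t ν) ^ 2 - 4) / b ∧
      0 < ((s ν) ^ 2 - 4) / a ∧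
      a * (((s ν) ^ 2 - 4) / a) + 4 = (s ν) ^ 2 ∧
      b * (((s ν) ^ 2 - 4) / a) + 4 = (t ν) ^ 2 := by
  intro ν hν
  have hb : 0 < b := ha.trans hab
  have hε2 : ε ^ 2 = 1 := sq_eq_one_iff.mpr hε
  have hr_two : 2 ≤ r := by nlinarith [mul_pos ha hb]
  set c := d4Extension a b r ε ν
  have hs : s ν ^ 2 = a * c + 4 := by
    rw [eq_mul_eval_C_add_mul_eval_S_of_recurrence (x := 1) (y := ε * a) hs0
      (by rw [hs1, one_mul]) hsrec, one_mul, sq_eval_C_add_eq_mul_d4Extension hr2 hε2]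
  have ht : t ν ^ 2 = b * c + 4 := by
    rw [eq_mul_eval_C_add_mul_eval_S_of_recurrence ht0 (by rw [ht1, add_comm]) htrec,
      sq_mul_eval_C_add_eq_mul_d4Extension hr2 hε2]
  have hc : 0 < c := by
    have hν' : (1 : ℤ) ≤ ν := mod_cast hν
    rcases hε with rfl | rfl
    · exact d4Extension_one_pos ha hb hr_two hν'
    · exact d4Extension_neg_one_pos ha (hbig rfl) hr_two hr2 hν'
  rw [hs, ht, add_sub_cancel_right, add_sub_cancel_right, Int.mul_ediv_cancel_left _ ha.ne',
    Int.mul_ediv_cancel_left _ hb.ne']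
  exact ⟨dvd_mul_right a c, dvd_mul_right b c, rfl, hc, rfl, rfl⟩
end

section
/- Let {a, b} be a D(4)-pair with a < b and ab + 4 = r² (r a positive integer), and let ε ∈ {+1, −1}. Then for every integer ν ≥ 1, c_{ν+1}^ε = a + b + c_ν^ε + (a·b·c_ν^ε + r·s_ν·t_ν)/2 and c_{ν−1}^ε = a + b + c_ν^ε + (a·b·c_ν^ε − r·s_ν·t_ν)/2; in other words, d₊(a, b, c_ν^ε) = c_{ν+1}^ε and d₋(a, b, c_ν^ε) = c_{ν−1}^ε. -/
/-!
Both formulas are half the sum and half the difference of the two identities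
`c (ν + 1) + c (ν - 1) = (a * b + 2) * c ν + 2 * (a + b)` and
`c (ν + 1) - c (ν - 1) = r * s ν * t ν`. After multiplication by `a` these concern the squares
`s (ν ± 1) ^ 2`. The first follows from `s (ν + 1) + s (ν - 1) = r * s ν` and the constancy of
`s (ν + 1) ^ 2 - r * s ν * s (ν + 1) + s ν ^ 2`; it also shows inductively that `a` divides
`s ν ^ 2 - 4`. The second is the factorisation of a difference of squares, because
`s (ν + 1) - s (ν - 1) = a * t ν`.
-/

section Recurrence

variable {R : Type*} [CommRing R] {r : R} {u : ℕ → R}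

theorem sq_sub_mul_add_sq_of_recurrence (hrec : ∀ n, u (n + 2) = r * u (n + 1) - u n) (n : ℕ) :
    u (n + 1) ^ 2 - r * u n * u (n + 1) + u n ^ 2 = u 1 ^ 2 - r * u 0 * u 1 + u 0 ^ 2 := by
  induction n with
  | zero => rfl
  | succ n ih =>
    rw [← ih, hrec]
    ring

theorem sq_add_sq_of_recurrence (hrec : ∀ n, u (n + 2) = r * u (n + 1) - u n) (n : ℕ) :
    u (n + 2) ^ 2 + u n ^ 2 =
      (r ^ 2 - 2) * u (n + 1) ^ 2 + 2 * (u 1 ^ 2 - r * u 0 * u 1 + u 0 ^ 2) := by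
  rw [← sq_sub_mul_add_sq_of_recurrence hrec n, hrec]
  ring

end Recurrence

section PairExtension

variable {R : Type*} [CommRing R] {a b r ε : R} {s t c : ℕ → R}
  (hr : a * b + 4 = r ^ 2) (hs0 : s 0 = 2) (hs1 : s 1 = r + ε * a)
  (hsrec : ∀ n, s (n + 2) = r * s (n + 1) - s n)

include hr hs0 hs1 hsrec

theorem s_add_two_sq_add_s_sq (hε : ε ^ 2 = 1) (n : ℕ) :
    s (n + 2) ^ 2 + s n ^ 2 = (a * b + 2) * s (n + 1) ^ 2 + 2 * a * (a - b) := by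
  rw [sq_add_sq_of_recurrence hsrec, hs0, hs1]
  linear_combination (2 - s (n + 1) ^ 2) * hr + 2 * a ^ 2 * hε

theorem dvd_s_sq_sub_four (hε : ε ^ 2 = 1) (n : ℕ) : a ∣ s n ^ 2 - 4 := by
  induction n using Nat.twoStepInduction with
  | zero => exact ⟨0, by rw [hs0]; ring⟩
  | one => exact ⟨b + 2 * ε * r + a, by rw [hs1]; linear_combination a ^ 2 * hε - hr⟩
  | more n ih ih' =>
    obtain ⟨k, hk⟩ := ih
    obtain ⟨l, hl⟩ := ih'
    refine ⟨(a * b + 2) * l - k + 2 * (a + b), ?_⟩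
    linear_combination s_add_two_sq_add_s_sq hr hs0 hs1 hsrec hε n + (a * b + 2) * hl - hk

theorem s_add_two_sub_s (ht0 : t 0 = 2 * ε) (ht1 : t 1 = b + ε * r)
    (htrec : ∀ n, t (n + 2) = r * t (n + 1) - t n) (n : ℕ) :
    s (n + 2) - s n = a * t (n + 1) := by
  induction n using Nat.twoStepInduction with
  | zero =>
    rw [hsrec, zero_add, hs0, hs1, ht1]
    linear_combination -hr
  | one =>
    rw [hsrec, hsrec, htrec, zero_add, hs0, hs1, ht0, ht1]
    linear_combination -r * hr
  | more n ih ih' =>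
    linear_combination hsrec (n + 2) - hsrec n - a * htrec (n + 1) + r * ih' - ih

theorem c_add_two_add_c (ha : IsLeftRegular a) (hε : ε ^ 2 = 1)
    (hc : ∀ n, a * c n = s n ^ 2 - 4) (n : ℕ) :
    c (n + 2) + c n = (a * b + 2) * c (n + 1) + 2 * (a + b) := by
  refine ha (?_ : a * _ = a * _)
  linear_combination s_add_two_sq_add_s_sq hr hs0 hs1 hsrec hε n + hc (n + 2) + hc n
    - (a * b + 2) * hc (n + 1)

theorem c_add_two_sub_c (ha : IsLeftRegular a) (ht0 : t 0 = 2 * ε) (ht1 : t 1 = b + ε * r)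
    (htrec : ∀ n, t (n + 2) = r * t (n + 1) - t n) (hc : ∀ n, a * c n = s n ^ 2 - 4) (n : ℕ) :
    c (n + 2) - c n = r * s (n + 1) * t (n + 1) := by
  refine ha (?_ : a * _ = a * _)
  have hsum : s (n + 2) + s n = r * s (n + 1) := by rw [hsrec, sub_add_cancel]
  calc a * (c (n + 2) - c n)
      = (s (n + 2) + s n) * (s (n + 2) - s n) := by rw [mul_sub, hc, hc]; ring
    _ = r * s (n + 1) * (a * t (n + 1)) := by
      rw [hsum, s_add_two_sub_s hr hs0 hs1 hsrec ht0 ht1 htrec]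
    _ = a * (r * s (n + 1) * t (n + 1)) := by ring

theorem c_seq_regular_up_and_down_general (ha : IsLeftRegular a) (hε : ε ^ 2 = 1)
    (ht0 : t 0 = 2 * ε) (ht1 : t 1 = b + ε * r)
    (htrec : ∀ n, t (n + 2) = r * t (n + 1) - t n) (hc : ∀ n, a * c n = s n ^ 2 - 4) (n : ℕ) :
    2 * c (n + 2) =
        2 * (a + b + c (n + 1)) + (a * b * c (n + 1) + r * s (n + 1) * t (n + 1)) ∧
      2 * c n =
        2 * (a + b + c (n + 1)) + (a * b * c (n + 1) - r * s (n + 1) * t (n + 1)) := by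
  have hadd := c_add_two_add_c hr hs0 hs1 hsrec ha hε hc n
  have hsub := c_add_two_sub_c hr hs0 hs1 hsrec ha ht0 ht1 htrec hc n
  constructor
  · linear_combination hadd + hsub
  · linear_combination hadd - hsub

end PairExtension

/-- Let `{a, b}` be a `D(4)`-pair with `a < b` and `a*b + 4 = r²`, and `ε ∈ {1, −1}`. With
the sequences `s_ν`, `t_ν` and `c_ν^ε = (s_ν² − 4)/a` as in the paper, for every `ν ≥ 1`:
`c_{ν+1}^ε = a + b + c_ν^ε + (a*b*c_ν^ε + r*s_ν*t_ν)/2` and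
`c_{ν−1}^ε = a + b + c_ν^ε + (a*b*c_ν^ε − r*s_ν*t_ν)/2`, i.e.
`d₊(a,b,c_ν^ε) = c_{ν+1}^ε` and `d₋(a,b,c_ν^ε) = c_{ν−1}^ε`. -/
theorem c_seq_regular_up_and_down
    (a b r : ℤ) (ha : 0 < a) (hab : a < b) (hr : 0 < r) (hr2 : a * b + 4 = r ^ 2)
    (ε : ℤ) (hε : ε = 1 ∨ ε = -1)
    (s t : ℕ → ℤ)
    (hs0 : s 0 = 2) (hs1 : s 1 = r + ε * a)
    (hsrec : ∀ ν : ℕ, s (ν + 2) = r * s (ν + 1) - s ν)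
    (ht0 : t 0 = 2 * ε) (ht1 : t 1 = b + ε * r)
    (htrec : ∀ ν : ℕ, t (ν + 2) = r * t (ν + 1) - t ν)
    (c : ℕ → ℤ) (hc : ∀ ν : ℕ, c ν = ((s ν) ^ 2 - 4) / a) :
    ∀ ν : ℕ, 1 ≤ ν →
      2 * c (ν + 1) = 2 * (a + b + c ν) + (a * b * c ν + r * s ν * t ν) ∧
      2 * c (ν - 1) = 2 * (a + b + c ν) + (a * b * c ν - r * s ν * t ν) := by
  have hε2 : ε ^ 2 = 1 := sq_eq_one_iff.mpr hε
  have hac (n : ℕ) : a * c n = s n ^ 2 - 4 := by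
    rw [hc, Int.mul_ediv_cancel' (dvd_s_sq_sub_four hr2 hs0 hs1 hsrec hε2 n)]
  intro ν hν
  obtain ⟨n, rfl⟩ := Nat.exists_eq_add_of_le' hν
  exact c_seq_regular_up_and_down_general hr2 hs0 hs1 hsrec (IsRegular.of_ne_zero ha.ne').left
    hε2 ht0 ht1 htrec hac n
end

section
/- Let {a, b, c} be a D(4)-triple with a < b ≤ 13.92·a, and suppose that {1, 5, a, b} is not a D(4)-quadruple. Then there exist a sign ε ∈ {+1, −1} and an integer ν ≥ 1 such that c = c_ν^ε. -/
/-- A set of four distinct positive integers such that the product of any two of its distinct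
elements increased by `4` is a perfect square. -/
def IsD4Quadruple (a b c d : ℤ) : Prop :=
  0 < a ∧ 0 < b ∧ 0 < c ∧ 0 < d ∧
  a ≠ b ∧ a ≠ c ∧ a ≠ d ∧ b ≠ c ∧ b ≠ d ∧ c ≠ d ∧
  IsSquare (a * b + 4) ∧ IsSquare (a * c + 4) ∧ IsSquare (a * d + 4) ∧
  IsSquare (b * c + 4) ∧ IsSquare (b * d + 4) ∧ IsSquare (c * d + 4)

/-- The sequence `s_ν` attached to a `D(4)`-pair `{a, b}` with `a*b + 4 = r²` and a sign `e`:
`s₀ = 2`, `s₁ = r + e*a`, `s_{ν+2} = r*s_{ν+1} − s_ν`. -/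
def sSeq (r e a : ℤ) : ℕ → ℤ
  | 0 => 2
  | 1 => r + e * a
  | (n + 2) => r * sSeq r e a (n + 1) - sSeq r e a n

/-!
Let `a * b + 4 = r²`, `a * c + 4 = s²`, `b * c + 4 = t²` with `c > 0` and `s, t ≥ 0`. The
triple `{a, b, c}` has the regular extension `d = a + b - c + r * w`, where
`w = (c * r - s * t) / 2` and `c * d + 4 = w²`, and passing from `d` back to `c` moves one place
along the sequences `c_ν^ε`. So it suffices to descend from `c` to `d` until `c ≤ 0`, where `c` is
`c_0 = 0` or, for `{a, b} = {3, 4}` only, `c_1^- = -1`. The descent can only get stuck at some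
`0 < c ≤ d`. Then `w < 0`, and `r * |w| = a + b - c - d < 4 * r` forces `w = -3` and `c * d = 5`:
this is the excluded quadruple `{1, 5, a, b}`. The inequality `a + b < 4 * r` follows from
`a < b ≤ 13.92 * a` because `13.92 < 7 + 4√3`, the larger root of `z² - 14 * z + 1`.
-/

section

variable {a b c d r s t w x y ε δ : ℤ}

theorem ne_of_isSquare_mul_add_four (ha : 0 < a) (h : IsSquare (a * b + 4)) : a ≠ b := by
  rintro rfl
  obtain ⟨k, hk⟩ := h
  have hk_abs : a * a + 4 = |k| * |k| := by rw [hk, abs_mul_abs_self]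
  have lower : a < |k| := by nlinarith [abs_nonneg k]
  have upper : |k| < a + 2 := by nlinarith
  rw [show |k| = a + 1 by lia] at hk_abs
  have : 2 * a = 3 := by linarith
  lia

theorem isD4Quadruple_of_isSquare (ha : 0 < a) (hb : 0 < b) (hc : 0 < c) (hd : 0 < d)
    (hab : IsSquare (a * b + 4)) (hac : IsSquare (a * c + 4)) (had : IsSquare (a * d + 4))
    (hbc : IsSquare (b * c + 4)) (hbd : IsSquare (b * d + 4)) (hcd : IsSquare (c * d + 4)) :
    IsD4Quadruple a b c d :=
  ⟨ha, hb, hc, hd,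
    ne_of_isSquare_mul_add_four ha hab, ne_of_isSquare_mul_add_four ha hac,
    ne_of_isSquare_mul_add_four ha had, ne_of_isSquare_mul_add_four hb hbc,
    ne_of_isSquare_mul_add_four hb hbd, ne_of_isSquare_mul_add_four hc hcd,
    hab, hac, had, hbc, hbd, hcd⟩

theorem two_mul_sSeq_succ (hr : a * b + 4 = r ^ 2) (hε : IsUnit ε) (n : ℕ) :
    2 * sSeq r ε a (n + 1) = r * sSeq r ε a n + a * (ε * sSeq r ε b n) := by
  induction n generalizing a b with
  | zero => simp only [sSeq]; ring
  | succ n ih =>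
    have ih_a := ih hr
    have ih_b := ih (a := b) (b := a) (by rw [mul_comm, hr])
    have hεε := Int.isUnit_mul_self hε
    rw [sSeq]
    refine mul_left_cancel₀ (two_ne_zero' ℤ) ?_
    linear_combination r * ih_a - a * ε * ih_b - sSeq r ε a n * hr - a * b * sSeq r ε a n * hεε

theorem two_mul_sSeq_eq_sub_succ (hr : a * b + 4 = r ^ 2) (hε : IsUnit ε) (n : ℕ) :
    2 * sSeq r ε a n = r * sSeq r ε a (n + 1) - a * (ε * sSeq r ε b (n + 1)) := by
  have step := two_mul_sSeq_succ hr hε (n + 1)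
  rw [sSeq] at step
  linarith

-- The sequences for `ε` and `-ε` are the two halves of a single sequence indexed by `ℤ`, so
-- the neighbour on the far side of `ν = 0` carries the opposite sign.
theorem exists_sSeq_neighbor (hr : a * b + 4 = r ^ 2) (hε : IsUnit ε) (hδ : IsUnit δ) (n : ℕ) :
    ∃ ε' : ℤ, IsUnit ε' ∧ ∃ m : ℕ,
      2 * sSeq r ε' a m = r * sSeq r ε a n + a * (δ * sSeq r ε b n) ∧
      2 * sSeq r ε' b m = r * sSeq r ε b n + b * (δ * sSeq r ε a n) := by
  have hr' : b * a + 4 = r ^ 2 := by rw [mul_comm, hr]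
  rcases Int.isUnit_eq_or_eq_neg hδ hε with rfl | rfl
  · exact ⟨δ, hδ, n + 1, two_mul_sSeq_succ hr hδ n, two_mul_sSeq_succ hr' hδ n⟩
  · cases n with
    | zero => exact ⟨-ε, hδ, 1, by simp only [sSeq]; ring, by simp only [sSeq]; ring⟩
    | succ n =>
      refine ⟨ε, hε, n, ?_, ?_⟩
      · rw [two_mul_sSeq_eq_sub_succ hr hε]; ring
      · rw [two_mul_sSeq_eq_sub_succ hr' hε]; ring

/-- `c` is one of the numbers `c_ν^ε` with `ν ≥ 0`. To make the notion symmetric in `a` and `b`,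
both square roots are recorded: the `s_ν` of the pair is `sSeq r ε a ν`, and its `t_ν` is
`ε * sSeq r ε b ν`. -/
def IsCNu (a b r c : ℤ) : Prop :=
  ∃ ε : ℤ, IsUnit ε ∧ ∃ ν : ℕ, a * c + 4 = sSeq r ε a ν ^ 2 ∧ b * c + 4 = sSeq r ε b ν ^ 2

theorem IsCNu.symm (h : IsCNu a b r c) : IsCNu b a r c := by
  obtain ⟨ε, hε, ν, ha, hb⟩ := h
  exact ⟨ε, hε, ν, hb, ha⟩

theorem isCNu_zero (a b r : ℤ) : IsCNu a b r 0 :=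
  ⟨1, isUnit_one, 0, by norm_num [sSeq], by norm_num [sSeq]⟩

theorem exists_isUnit_mul_of_sq_eq_sq (h : x ^ 2 = y ^ 2) : ∃ η : ℤ, IsUnit η ∧ x = η * y := by
  rcases sq_eq_sq_iff_eq_or_eq_neg.1 h with rfl | rfl
  · exact ⟨1, isUnit_one, (one_mul x).symm⟩
  · exact ⟨-1, isUnit_one.neg, (neg_one_mul y).symm⟩

theorem IsCNu.of_neighbor (hd : IsCNu a b r d) (hr : a * b + 4 = r ^ 2)
    (hx : a * d + 4 = x ^ 2) (hy : b * d + 4 = y ^ 2)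
    (hs : a * c + 4 = s ^ 2) (ht : b * c + 4 = t ^ 2)
    (hsxy : 2 * s = r * x + a * y) (htxy : 2 * t = r * y + b * x) : IsCNu a b r c := by
  obtain ⟨ε, hε, n, hda, hdb⟩ := hd
  obtain ⟨η, hη, rfl⟩ := exists_isUnit_mul_of_sq_eq_sq (hx.symm.trans hda)
  obtain ⟨θ, hθ, rfl⟩ := exists_isUnit_mul_of_sq_eq_sq (hy.symm.trans hdb)
  obtain ⟨ε', hε', m, hma, hmb⟩ := exists_sSeq_neighbor hr hε (hη.mul hθ) n
  have hηη := Int.isUnit_mul_self hη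
  have hθθ := Int.isUnit_mul_self hθ
  have s_eq : s = η * sSeq r ε' a m := by
    refine mul_left_cancel₀ (two_ne_zero' ℤ) ?_
    linear_combination hsxy - η * hma - a * θ * sSeq r ε b n * hηη
  have t_eq : t = θ * sSeq r ε' b m := by
    refine mul_left_cancel₀ (two_ne_zero' ℤ) ?_
    linear_combination htxy - θ * hmb - b * η * sSeq r ε a n * hθθ
  refine ⟨ε', hε', m, ?_, ?_⟩
  · rw [hs, s_eq, mul_pow, sq η, hηη, one_mul]
  · rw [ht, t_eq, mul_pow, sq θ, hθθ, one_mul]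

theorem even_mul_sub_mul (hr : a * b + 4 = r ^ 2) (hs : a * c + 4 = s ^ 2)
    (ht : b * c + 4 = t ^ 2) : Even (r * s - a * t) := by
  have even_sq_sub_sq : Even ((r * s) ^ 2 - (a * t) ^ 2) :=
    ⟨2 * (a * b + a * c + 4 - a ^ 2), by rw [mul_pow, mul_pow, ← hr, ← hs, ← ht]; ring⟩
  rw [Int.even_sub] at even_sq_sub_sq ⊢
  simpa only [Int.even_pow' two_ne_zero] using even_sq_sub_sq

theorem mul_regular_extension_add_four (hr : a * b + 4 = r ^ 2) (hs : a * c + 4 = s ^ 2)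
    (ht : b * c + 4 = t ^ 2) (hx : 2 * x = r * s - a * t) (hw : 2 * w = c * r - s * t) :
    a * (a + b - c + r * w) + 4 = x ^ 2 := by
  refine mul_left_cancel₀ (four_ne_zero' ℤ) ?_
  linear_combination -(2 * x + (r * s - a * t)) * hx + 2 * a * r * hw + (s ^ 2 - 2 * a * c) * hr +
    (a * b + 4) * hs + a ^ 2 * ht

theorem exists_regular_extension (hr : a * b + 4 = r ^ 2) (hs : a * c + 4 = s ^ 2)
    (ht : b * c + 4 = t ^ 2) :
    ∃ d x y w : ℤ, a * d + 4 = x ^ 2 ∧ b * d + 4 = y ^ 2 ∧ c * d + 4 = w ^ 2 ∧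
      2 * x = r * s - a * t ∧ 2 * y = r * t - b * s ∧ 2 * w = c * r - s * t ∧
      r * w = c + d - a - b := by
  have hr' : b * a + 4 = r ^ 2 := mul_comm a b ▸ hr
  have hs' : c * a + 4 = s ^ 2 := mul_comm a c ▸ hs
  have ht' : c * b + 4 = t ^ 2 := mul_comm b c ▸ ht
  obtain ⟨x, hx⟩ := (even_mul_sub_mul hr hs ht).two_dvd
  obtain ⟨y, hy⟩ := (even_mul_sub_mul hr' ht hs).two_dvd
  obtain ⟨v, hv⟩ := (even_mul_sub_mul hs' ht' hr).two_dvd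
  have hw : 2 * -v = c * r - s * t := by linarith
  refine ⟨a + b - c + r * -v, x, y, -v, ?_, ?_, ?_, hx.symm, hy.symm, hw, by ring⟩
  · exact mul_regular_extension_add_four hr hs ht hx.symm hw
  · rw [add_comm a b]
    exact mul_regular_extension_add_four hr' ht hs hy.symm (by rw [hw, mul_comm s t])
  · refine mul_left_cancel₀ (four_ne_zero' ℤ) ?_
    linear_combination (c * r + s * t - 2 * -v) * hw - c ^ 2 * hr + (b * c + 4) * hs + s ^ 2 * ht

theorem two_mul_eq_add_of_two_mul_eq_sub (hr : a * b + 4 = r ^ 2)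
    (hx : 2 * x = r * s - a * t) (hy : 2 * y = r * t - b * s) : 2 * s = r * x + a * y := by
  refine mul_left_cancel₀ (two_ne_zero' ℤ) ?_
  linear_combination s * hr - r * hx - a * hy

theorem isCNu_of_mul_eq_neg_three_of_mul_eq_neg_four (hr_pos : 0 < r) (hr : a * b + 4 = r ^ 2)
    (hc : c < 0) (hac : a * c = -3) (hbc : b * c = -4) : IsCNu a b r c := by
  have sub_mul_eq_one : (a - b) * c = 1 := by linarith
  obtain rfl : c = -1 := by
    rcases Int.isUnit_iff.1 (IsUnit.of_mul_eq_one_right _ sub_mul_eq_one) with h | h <;> lia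
  obtain rfl : a = 3 := by linarith
  obtain rfl : b = 4 := by linarith
  obtain rfl : r = 4 := by nlinarith
  exact ⟨-1, isUnit_one.neg, 1, by norm_num [sSeq], by norm_num [sSeq]⟩

theorem isCNu_of_neg (ha : 0 < a) (hb : 0 < b) (hr_pos : 0 < r) (hr : a * b + 4 = r ^ 2)
    (hac : IsSquare (a * c + 4)) (hbc : IsSquare (b * c + 4)) (hc : c < 0) : IsCNu a b r c := by
  have eq_neg_three_or_neg_four {m : ℤ} (hm : 0 < m) (h : IsSquare (m * c + 4)) :
      m * c = -3 ∨ m * c = -4 := by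
    obtain ⟨k, hk⟩ := (isSquare_iff_exists_sq _).1 h
    have k_sq_lt : k ^ 2 < 2 ^ 2 := by linarith [mul_neg_of_pos_of_neg hm hc]
    obtain ⟨k_gt, k_lt⟩ := abs_lt.1 (abs_lt_of_sq_lt_sq k_sq_lt two_pos.le)
    interval_cases k <;> omega
  have hab : a * c ≠ b * c := fun h ↦
    ne_of_isSquare_mul_add_four ha (hr ▸ IsSquare.sq r) (mul_right_cancel₀ hc.ne h)
  rcases eq_neg_three_or_neg_four ha hac with hac | hac <;>
    rcases eq_neg_three_or_neg_four hb hbc with hbc | hbc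
  · exact absurd (hac.trans hbc.symm) hab
  · exact isCNu_of_mul_eq_neg_three_of_mul_eq_neg_four hr_pos hr hc hac hbc
  · exact (isCNu_of_mul_eq_neg_three_of_mul_eq_neg_four hr_pos (mul_comm a b ▸ hr) hc hbc hac).symm
  · exact absurd (hac.trans hbc.symm) hab

theorem eq_one_and_eq_five_of_le (hab : 0 < a + b) (hlt : a + b < 4 * r)
    (hc : 0 < c) (hcd : c ≤ d) (hw : c * d + 4 = w ^ 2) (hrw : r * w = c + d - a - b)
    (hwc : 2 * w ≤ c * r) : c = 1 ∧ d = 5 := by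
  have w_neg : w < 0 := by
    by_contra! hw_nonneg
    have : 2 * (c * d + 4) ≤ c * (c + d - a - b) := by
      calc 2 * (c * d + 4) = 2 * w * w := by rw [hw]; ring
        _ ≤ c * r * w := by gcongr
        _ = c * (c + d - a - b) := by rw [mul_assoc, hrw]
    nlinarith
  have w_gt : -4 < w := by
    have hr_pos : 0 < r := by linarith
    exact lt_of_mul_lt_mul_left (by linarith) hr_pos.le
  have cd_pos : 0 < c * d := mul_pos hc (hc.trans_le hcd)
  have cd_eq : c * d = 5 := by interval_cases w <;> lia
  have c_le : c ≤ 2 := by nlinarith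
  interval_cases c <;> lia

theorem regular_extension_lt (ha : 0 < a) (hb : 0 < b) (hr : a * b + 4 = r ^ 2)
    (hlt : a + b < 4 * r) (hquad : ¬ IsD4Quadruple 1 5 a b) (hc : 0 < c)
    (hac : IsSquare (a * c + 4)) (hbc : IsSquare (b * c + 4)) (had : IsSquare (a * d + 4))
    (hbd : IsSquare (b * d + 4)) (hw : c * d + 4 = w ^ 2) (hrw : r * w = c + d - a - b)
    (hwc : 2 * w ≤ c * r) : d < c := by
  by_contra! hcd
  obtain ⟨rfl, rfl⟩ := eq_one_and_eq_five_of_le (add_pos ha hb) hlt hc hcd hw hrw hwc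
  rw [mul_comm] at hac hbc had hbd
  exact hquad <| isD4Quadruple_of_isSquare one_pos (by norm_num) ha hb (hw ▸ IsSquare.sq w)
    hac hbc had hbd (hr ▸ IsSquare.sq r)

theorem isCNu_of_isSquare (ha : 0 < a) (hb : 0 < b) (hr : a * b + 4 = r ^ 2)
    (hlt : a + b < 4 * r) (hquad : ¬ IsD4Quadruple 1 5 a b)
    (hac : IsSquare (a * c + 4)) (hbc : IsSquare (b * c + 4)) : IsCNu a b r c := by
  induction hn : c.toNat using Nat.strong_induction_on generalizing c with
  | _ n ih =>
    subst hn
    rcases lt_trichotomy c 0 with hc | rfl | hc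
    · exact isCNu_of_neg ha hb (by linarith) hr hac hbc hc
    · exact isCNu_zero a b r
    · obtain ⟨s, hs⟩ := (isSquare_iff_exists_sq _).1 hac
      obtain ⟨t, ht⟩ := (isSquare_iff_exists_sq _).1 hbc
      rw [← sq_abs] at hs ht
      obtain ⟨d, x, y, w, hx, hy, hw, hxst, hyst, hwst, hrw⟩ := exists_regular_extension hr hs ht
      have had : IsSquare (a * d + 4) := hx ▸ IsSquare.sq x
      have hbd : IsSquare (b * d + 4) := hy ▸ IsSquare.sq y
      have hwc : 2 * w ≤ c * r := by linarith [mul_nonneg (abs_nonneg s) (abs_nonneg t)]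
      have hdc : d < c :=
        regular_extension_lt ha hb hr hlt hquad hc hac hbc had hbd hw hrw hwc
      have hd : IsCNu a b r d := ih d.toNat (by lia) had hbd rfl
      exact hd.of_neighbor hr hx hy hs ht (two_mul_eq_add_of_two_mul_eq_sub hr hxst hyst)
        (two_mul_eq_add_of_two_mul_eq_sub (mul_comm a b ▸ hr) hyst hxst)

theorem third_element_of_triple_is_c_nu_general (ha : 0 < a) (hb : 0 < b)
    (hr : a * b + 4 = r ^ 2) (hlt : a + b < 4 * r) (hc : 0 < c)
    (hac : IsSquare (a * c + 4)) (hbc : IsSquare (b * c + 4))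
    (hquad : ¬ IsD4Quadruple 1 5 a b) :
    ∃ ε : ℤ, (ε = 1 ∨ ε = -1) ∧ ∃ ν : ℕ, 1 ≤ ν ∧ a * c = (sSeq r ε a ν) ^ 2 - 4 := by
  obtain ⟨ε, hε, ν, hν, -⟩ := isCNu_of_isSquare ha hb hr hlt hquad hac hbc
  refine ⟨ε, Int.isUnit_iff.1 hε, ν, Nat.one_le_iff_ne_zero.2 ?_, eq_sub_of_add_eq hν⟩
  rintro rfl
  rw [sSeq] at hν
  linarith [mul_pos ha hc]

theorem add_lt_four_mul_of_le (ha : 0 < a) (hab : a ≤ b) (hb : (b : ℝ) ≤ 13.92 * (a : ℝ))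
    (hr_pos : 0 < r) (hr : a * b + 4 = r ^ 2) : a + b < 4 * r := by
  have hb_int : 100 * b ≤ 1392 * a := by
    have : (100 * b : ℝ) ≤ 1392 * a := by linarith
    exact_mod_cast this
  refine lt_of_pow_lt_pow_left₀ 2 (by positivity) ?_
  rw [mul_pow, ← hr]
  nlinarith [mul_nonneg (sub_nonneg.2 hab) (sub_nonneg.2 hb_int),
    mul_nonneg ha.le (sub_nonneg.2 hb_int)]

end

/-- Let `{a, b, c}` be a `D(4)`-triple with `a < b ≤ 13.92·a`, and suppose `{1, 5, a, b}` is not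
a `D(4)`-quadruple. Then `c = c_ν^ε = (s_ν² − 4)/a` for some sign `ε` and some `ν ≥ 1`. -/
theorem third_element_of_triple_is_c_nu
    (a b c r : ℤ) (ha : 0 < a) (hab : a < b) (hb : (b : ℝ) ≤ 13.92 * (a : ℝ))
    (hc : 0 < c) (hca : c ≠ a) (hcb : c ≠ b)
    (hr : 0 < r) (hr2 : a * b + 4 = r ^ 2)
    (hac : IsSquare (a * c + 4)) (hbc : IsSquare (b * c + 4))
    (hquad : ¬ IsD4Quadruple 1 5 a b) :
    ∃ ε : ℤ, (ε = 1 ∨ ε = -1) ∧ ∃ ν : ℕ, 1 ≤ ν ∧ a * c = (sSeq r ε a ν) ^ 2 - 4 := by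
  exact third_element_of_triple_is_c_nu_general ha (ha.trans hab) hr2
    (add_lt_four_mul_of_le ha hab.le hb hr hr2) hc hac hbc hquad
end

section
/- Let k ∈ {10, 11, 12, 13} and let {a, ka, c} be a D(4)-triple (a a positive integer). Then there exist a sign ε ∈ {+1, −1} and an integer ν ≥ 1 such that c = c_ν^ε, where the sequences are built from the pair {a, ka}. -/
/-!
For a `D(4)`-triple `{a, b, c}` with `ab + 4 = r²`, `ac + 4 = s²`, `bc + 4 = t²`, the integer
`d = a + b + c + (abc - rst)/2` extends the pair `{a, b}` as well, and `c` is recovered from `d` by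
one step of the recurrences of `(s_ν, t_ν)`. So it suffices that `d < c`: the descent then ends
at `d = 0`, whose roots `(2, ±2)` are the initial values of the two sequences.

If `c ≤ d`, put `u = (st - cr)/2 > 0`. Then `u² = cd + 4` and `a + b = c + d + ru`, so either
`u ≥ 4` and `a + b > 4r`, or `u = 3`, `{c, d} = {1, 5}` and `a + b = 3r + 6`. For `b = ka` with
`10 ≤ k ≤ 13` neither is possible.
-/

/-- The companion `t_ν` of `sSeq`, for a pair `{a, b}` with `a * b + 4 = r ^ 2` and a sign `e`. -/
def tSeq (r e b : ℤ) : ℕ → ℤ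
  | 0 => 2 * e
  | 1 => b + e * r
  | (n + 2) => r * tSeq r e b (n + 1) - tSeq r e b n

/-- The `D(4)`-conditions on three integers, with named square roots. Neither positivity nor
distinctness is required and roots may have either sign, so that the extension of a pair by `0`
is covered. -/
structure IsD4Triple (a b c r s t : ℤ) : Prop where
  ab : a * b + 4 = r ^ 2
  ac : a * c + 4 = s ^ 2
  bc : b * c + 4 = t ^ 2

/-- The smaller regular extension `d₋` of a `D(4)`-triple; the division is exact by
`IsD4Triple.two_mul_lowerExtension`. -/
def lowerExtension (a b c r s t : ℤ) : ℤ :=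
  a + b + c + (a * b * c - r * s * t) / 2

/-- The square root of `a * d₋ + 4` for a `D(4)`-triple in which `r`, `s` are the roots of the
pairs containing `a` and `t` is the third root; the division is exact by
`IsD4Triple.two_mul_lowerRoot`. -/
def lowerRoot (a r s t : ℤ) : ℤ :=
  (r * s - a * t) / 2

theorem two_mul_sSeq_succ_and_tSeq_succ {a b r : ℤ} (hab : a * b + 4 = r ^ 2) (e : ℤ) (n : ℕ) :
    2 * sSeq r e a (n + 1) = r * sSeq r e a n + a * tSeq r e b n ∧
      2 * tSeq r e b (n + 1) = r * tSeq r e b n + b * sSeq r e a n := by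
  induction n with
  | zero => constructor <;> simp only [sSeq, tSeq] <;> ring
  | succ n ih =>
    obtain ⟨ihs, iht⟩ := ih
    simp only [sSeq, tSeq]
    constructor <;> refine mul_left_cancel₀ (two_ne_zero (α := ℤ)) ?_
    · linear_combination r * ihs - a * iht - sSeq r e a n * hab
    · linear_combination r * iht - b * ihs - tSeq r e b n * hab

theorem add_eq_seven_of_le_four {a b r : ℤ} (ha : 0 < a) (hb : 0 < b) (ha4 : a ≤ 4) (hb4 : b ≤ 4)
    (hab : a * b + 4 = r ^ 2) : a + b = 7 := by
  wlog hr : 0 ≤ r generalizing r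
  · exact this (r := -r) (by rw [hab, neg_sq]) (by linarith)
  have hr4 : r ≤ 4 := by nlinarith
  interval_cases a <;> interval_cases b <;> interval_cases r <;> simp_all

namespace IsD4Triple

variable {a b c r s t : ℤ}

theorem swap (h : IsD4Triple a b c r s t) : IsD4Triple b a c r t s :=
  ⟨by rw [mul_comm, h.ab], h.bc, h.ac⟩

theorem rotate (h : IsD4Triple a b c r s t) : IsD4Triple c a b s t r :=
  ⟨by rw [mul_comm, h.ac], by rw [mul_comm, h.bc], h.ab⟩

theorem neg_root (h : IsD4Triple a b c r s t) : IsD4Triple a b c r s (-t) :=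
  ⟨h.ab, h.ac, by rw [h.bc, neg_sq]⟩

theorem sq_mul_sub_sq_mul (h : IsD4Triple a b c r s t) :
    (r * s) ^ 2 - (a * t) ^ 2 = 4 * (a * (b - a) + a * c + 4) := by
  rw [mul_pow, mul_pow, ← h.ab, ← h.ac, ← h.bc]
  ring

theorem even_mul_sub_mul (h : IsD4Triple a b c r s t) : Even (r * s - a * t) := by
  have hsq : Even ((r * s) ^ 2 - (a * t) ^ 2) := by
    rw [h.sq_mul_sub_sq_mul]
    exact Even.mul_right (by decide) _
  rwa [Int.even_sub, Int.even_pow' two_ne_zero, Int.even_pow' two_ne_zero, ← Int.even_sub] at hsq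

theorem two_mul_lowerRoot (h : IsD4Triple a b c r s t) :
    2 * lowerRoot a r s t = r * s - a * t :=
  Int.mul_ediv_cancel' h.even_mul_sub_mul.two_dvd

theorem two_mul_lowerExtension (h : IsD4Triple a b c r s t) :
    2 * lowerExtension a b c r s t = 2 * (a + b + c) + a * b * c - r * s * t := by
  have heven : Even (a * b * c - r * s * t) := by
    have heq : a * b * c - r * s * t = -t * (r * s - a * t) - 2 * (2 * a) := by
      linear_combination a * h.bc
    rw [heq]
    exact (h.even_mul_sub_mul.mul_left _).sub (even_two_mul _)
  rw [lowerExtension, mul_add, Int.mul_ediv_cancel' heven.two_dvd]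
  ring

theorem lowerExtension_swap (h : IsD4Triple a b c r s t) :
    lowerExtension b a c r t s = lowerExtension a b c r s t := by
  linarith [h.two_mul_lowerExtension, h.swap.two_mul_lowerExtension]

theorem lowerExtension_rotate (h : IsD4Triple a b c r s t) :
    lowerExtension c a b s t r = lowerExtension a b c r s t := by
  linarith [h.two_mul_lowerExtension, h.rotate.two_mul_lowerExtension]

theorem mul_lowerExtension_add_four (h : IsD4Triple a b c r s t) :
    a * lowerExtension a b c r s t + 4 = lowerRoot a r s t ^ 2 := by
  refine mul_left_cancel₀ (four_ne_zero (α := ℤ)) ?_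
  calc 4 * (a * lowerExtension a b c r s t + 4) = (r * s - a * t) ^ 2 := by
        linear_combination 2 * a * h.two_mul_lowerExtension + s ^ 2 * h.ab
          + (a * b + 4) * h.ac + a ^ 2 * h.bc
    _ = 4 * lowerRoot a r s t ^ 2 := by rw [← h.two_mul_lowerRoot]; ring

theorem lower (h : IsD4Triple a b c r s t) :
    IsD4Triple a b (lowerExtension a b c r s t) r (lowerRoot a r s t) (lowerRoot b r t s) where
  ab := h.ab
  ac := h.mul_lowerExtension_add_four
  bc := by rw [← h.lowerExtension_swap, h.swap.mul_lowerExtension_add_four]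

theorem two_mul_root_eq (h : IsD4Triple a b c r s t) :
    2 * s = r * lowerRoot a r s t + a * lowerRoot b r t s := by
  refine mul_left_cancel₀ (two_ne_zero (α := ℤ)) ?_
  linear_combination s * h.ab - r * h.two_mul_lowerRoot - a * h.swap.two_mul_lowerRoot

theorem lowerRoot_lower (h : IsD4Triple a b c r s t) :
    lowerRoot a r (lowerRoot a r s t) (-lowerRoot b r t s) = s := by
  linarith [h.lower.neg_root.two_mul_lowerRoot, h.two_mul_root_eq]

theorem lowerExtension_lower (h : IsD4Triple a b c r s t) (ha : a ≠ 0) :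
    lowerExtension a b (lowerExtension a b c r s t) r (lowerRoot a r s t) (-lowerRoot b r t s)
      = c := by
  have hsq := h.lower.neg_root.mul_lowerExtension_add_four
  rw [h.lowerRoot_lower, ← h.ac] at hsq
  exact mul_left_cancel₀ ha (add_right_cancel hsq)

theorem add_eq_add_lowerExtension (h : IsD4Triple a b c r s t) :
    a + b = c + lowerExtension a b c r s t + r * lowerRoot c s t r := by
  refine mul_left_cancel₀ (two_ne_zero (α := ℤ)) ?_
  linear_combination -h.two_mul_lowerExtension - r * h.rotate.two_mul_lowerRoot - c * h.ab

theorem lowerRoot_pos (h : IsD4Triple a b c r s t) (ha : 0 < a) (hab : a ≤ b) (hc : 0 ≤ c)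
    (hr : 0 < r) (hs : 0 < s) : 0 < lowerRoot a r s t := by
  have hsq : (a * t) ^ 2 < (r * s) ^ 2 := by
    have : 0 ≤ a * (b - a) := mul_nonneg ha.le (sub_nonneg.2 hab)
    have : 0 ≤ a * c := by positivity
    linarith [h.sq_mul_sub_sq_mul]
  linarith [lt_of_pow_lt_pow_left₀ 2 (by positivity) hsq, h.two_mul_lowerRoot]

theorem lowerExtension_nonneg (h : IsD4Triple a b c r s t) (ha : 0 < a) (hb : 0 < b)
    (hc : 0 < c) : 0 ≤ lowerExtension a b c r s t := by
  by_contra! hd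
  have le_four {x y : ℤ} (hx : 0 < x)
      (hxy : x * lowerExtension a b c r s t + 4 = y ^ 2) : x ≤ 4 := by
    nlinarith [sq_nonneg y]
  have ha4 : a ≤ 4 := le_four ha h.lower.ac
  have hb4 : b ≤ 4 := le_four hb h.lower.bc
  have hc4 : c ≤ 4 :=
    le_four hc (h.lowerExtension_rotate ▸ h.rotate.mul_lowerExtension_add_four)
  -- The three pairwise sums are all `7`, but they add up to an even number.
  have hsum_ab := add_eq_seven_of_le_four ha hb ha4 hb4 h.ab
  have hsum_ac := add_eq_seven_of_le_four ha hc ha4 hc4 h.ac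
  have hsum_bc := add_eq_seven_of_le_four hb hc hb4 hc4 h.bc
  omega

theorem lowerRoot_pos_of_le_lowerExtension (h : IsD4Triple a b c r s t) (hab : 0 < a + b)
    (hr : 0 < r) (hst : 0 < s * t) (hcd : c ≤ lowerExtension a b c r s t) :
    0 < lowerRoot c s t r := by
  have husq := h.rotate.mul_lowerExtension_add_four
  have hu := h.rotate.two_mul_lowerRoot
  have hsum := h.add_eq_add_lowerExtension
  rw [h.lowerExtension_rotate] at husq
  set d := lowerExtension a b c r s t
  set u := lowerRoot c s t r
  by_contra! hneg
  have hlt_c : 2 * -u < c * r := by linarith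
  have hlt_d : r * -u < 2 * d := by linarith
  have hprod : 2 * -u * (r * -u) < c * r * (2 * d) :=
    mul_lt_mul'' hlt_c hlt_d (by linarith) (mul_nonneg hr.le (by linarith))
  have hlt_cd : u ^ 2 < c * d := by
    refine lt_of_mul_lt_mul_left (a := 2 * r) ?_ (by positivity)
    linarith
  linarith

theorem lowerExtension_lt (h : IsD4Triple a b c r s t) (hab : 0 < a + b) (hc : 0 < c)
    (hr : 0 < r) (hst : 0 < s * t) (hlt : a + b < 4 * r) (hne : a + b ≠ 3 * r + 6) :
    lowerExtension a b c r s t < c := by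
  by_contra! hcd
  have hupos := h.lowerRoot_pos_of_le_lowerExtension hab hr hst hcd
  have husq := h.rotate.mul_lowerExtension_add_four
  have hsum := h.add_eq_add_lowerExtension
  rw [h.lowerExtension_rotate] at husq
  set d := lowerExtension a b c r s t
  set u := lowerRoot c s t r
  have hu4 : u < 4 := by nlinarith
  have hu3 : 3 ≤ u := by nlinarith
  have hu : u = 3 := by omega
  rw [hu] at husq hsum
  have hc2 : c ≤ 2 := by nlinarith
  interval_cases c <;> omega

theorem root_eq_or_exists_smaller (h : IsD4Triple a b c r s t) (ha : 0 < a) (hab : a < b)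
    (hc : 0 < c) (hr : 0 < r) (hs : 0 < s) (ht : 0 < t) (hlt : a + b < 4 * r)
    (hne : a + b ≠ 3 * r + 6) :
    (∃ ε : ℤ, (ε = 1 ∨ ε = -1) ∧ s = r + ε * a ∧ t = b + ε * r) ∨
      ∃ d x y : ℤ, IsD4Triple a b d r x y ∧ 0 < d ∧ d < c ∧ 0 < x ∧ 0 < y ∧
        2 * s = r * x + a * y ∧ 2 * t = r * y + b * x := by
  have hb : 0 < b := ha.trans hab
  have hdc := h.lowerExtension_lt (by positivity) hc hr (by positivity) hlt hne
  have hx := h.lowerRoot_pos ha hab.le hc.le hr hs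
  have hd := h.lowerExtension_nonneg ha hb hc
  have hlower := h.lower
  have hback := h.lowerExtension_lower ha.ne'
  have hs_eq := h.two_mul_root_eq
  have ht_eq := h.swap.two_mul_root_eq
  generalize lowerExtension a b c r s t = d at *
  generalize lowerRoot a r s t = x at *
  generalize lowerRoot b r t s = y at *
  rcases hd.eq_or_lt with rfl | hd
  · left
    obtain rfl : x = 2 := by nlinarith [hlower.ac]
    have hy : y ^ 2 = 2 ^ 2 := by linarith [hlower.bc]
    rcases sq_eq_sq_iff_eq_or_eq_neg.1 hy with rfl | rfl
    · exact ⟨1, .inl rfl, by linarith, by linarith⟩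
    · exact ⟨-1, .inr rfl, by linarith, by linarith⟩
  · right
    refine ⟨d, x, y, hlower, hd, hdc, hx, ?_, hs_eq, ht_eq⟩
    by_contra! hy
    have hy0 : y ≠ 0 := by
      rintro rfl
      nlinarith [hlower.bc, mul_pos hb hd]
    -- If `y < 0`, the lower extension of the positive triple with roots `x`, `-y` is `c > d`.
    have hxy : 0 < x * -y := mul_pos hx (neg_pos.2 (hy.lt_of_ne hy0))
    have hcd := hlower.neg_root.lowerExtension_lt (by positivity) hd hr hxy hlt hne
    rw [hback] at hcd
    exact hdc.asymm hcd

theorem exists_roots_eq_seq (h : IsD4Triple a b c r s t) (ha : 0 < a) (hab : a < b)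
    (hc : 0 < c) (hr : 0 < r) (hs : 0 < s) (ht : 0 < t) (hlt : a + b < 4 * r)
    (hne : a + b ≠ 3 * r + 6) :
    ∃ ε : ℤ, (ε = 1 ∨ ε = -1) ∧ ∃ ν : ℕ, 1 ≤ ν ∧ s = sSeq r ε a ν ∧ t = tSeq r ε b ν := by
  induction hn : c.toNat using Nat.strong_induction_on generalizing c s t with
  | _ n ih =>
  rcases h.root_eq_or_exists_smaller ha hab hc hr hs ht hlt hne with
    ⟨ε, hε, hs_eq, ht_eq⟩ | ⟨d, x, y, hd, hd0, hdc, hx, hy, hs_eq, ht_eq⟩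
  · exact ⟨ε, hε, 1, le_rfl, hs_eq, ht_eq⟩
  · obtain ⟨ε, hε, ν, -, rfl, rfl⟩ := ih d.toNat (by omega) hd hd0 hx hy rfl
    obtain ⟨hs_succ, ht_succ⟩ := two_mul_sSeq_succ_and_tSeq_succ h.ab ε ν
    exact ⟨ε, hε, ν + 1, by omega, by linarith, by linarith⟩

end IsD4Triple

theorem third_element_of_a_ka_triple_is_c_nu_general {a b c r : ℤ} (ha : 0 < a) (hab : a < b)
    (hc : 0 < c) (hr : 0 < r) (hr2 : a * b + 4 = r ^ 2) (hlt : a + b < 4 * r)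
    (hne : a + b ≠ 3 * r + 6) (hac : IsSquare (a * c + 4)) (hbc : IsSquare (b * c + 4)) :
    ∃ ε : ℤ, (ε = 1 ∨ ε = -1) ∧ ∃ ν : ℕ, 1 ≤ ν ∧ a * c = (sSeq r ε a ν) ^ 2 - 4 := by
  have exists_pos_root {n : ℤ} (hn : 0 < n) (hsq : IsSquare (n + 4)) :
      ∃ x : ℤ, 0 < x ∧ n + 4 = x ^ 2 := by
    obtain ⟨x, hx⟩ := hsq
    refine ⟨|x|, abs_pos.2 ?_, by rw [sq_abs, hx, sq]⟩
    rintro rfl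
    linarith
  obtain ⟨s, hs, hs2⟩ := exists_pos_root (mul_pos ha hc) hac
  obtain ⟨t, ht, ht2⟩ := exists_pos_root (mul_pos (ha.trans hab) hc) hbc
  have htriple : IsD4Triple a b c r s t := ⟨hr2, hs2, ht2⟩
  obtain ⟨ε, hε, ν, hν, rfl, -⟩ := htriple.exists_roots_eq_seq ha hab hc hr hs ht hlt hne
  exact ⟨ε, hε, ν, hν, eq_sub_of_add_eq hs2⟩

theorem add_mul_lt_four_mul {k a r : ℤ} (hk : k ^ 2 + 1 ≤ 14 * k) (hr : 0 < r)
    (hr2 : a * (k * a) + 4 = r ^ 2) : a + k * a < 4 * r := by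
  have hsq : (a + k * a) ^ 2 < (4 * r) ^ 2 := by
    nlinarith [mul_nonneg (sub_nonneg.2 hk) (sq_nonneg a)]
  exact lt_of_pow_lt_pow_left₀ 2 (by positivity) hsq

theorem mul_eq_of_add_mul_eq_three_mul_add_six {k a r : ℤ} (ha : a ≠ 0)
    (hr2 : a * (k * a) + 4 = r ^ 2) (heq : a + k * a = 3 * r + 6) :
    a * (k ^ 2 - 7 * k + 1) = 12 * (k + 1) := by
  refine mul_left_cancel₀ ha ?_
  linear_combination (a + k * a - 6 + 3 * r) * heq - 9 * hr2

/-- For `k ∈ {10,11,12,13}`, if `{a, ka, c}` is a `D(4)`-triple then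
`c = c_ν^ε = (s_ν² − 4)/a` for some sign `ε` and some `ν ≥ 1`, where the sequences are built
from the pair `{a, ka}`. -/
theorem third_element_of_a_ka_triple_is_c_nu
    (k a c r : ℤ) (hk : k ∈ ({10, 11, 12, 13} : Set ℤ)) (ha : 0 < a)
    (hc : 0 < c) (hca : c ≠ a) (hcb : c ≠ k * a)
    (hr : 0 < r) (hr2 : a * (k * a) + 4 = r ^ 2)
    (hac : IsSquare (a * c + 4)) (hbc : IsSquare ((k * a) * c + 4)) :
    ∃ ε : ℤ, (ε = 1 ∨ ε = -1) ∧ ∃ ν : ℕ, 1 ≤ ν ∧ a * c = (sSeq r ε a ν) ^ 2 - 4 := by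
  simp only [Set.mem_insert_iff, Set.mem_singleton_iff] at hk
  have hlt : a + k * a < 4 * r := by
    refine add_mul_lt_four_mul ?_ hr hr2
    rcases hk with rfl | rfl | rfl | rfl <;> norm_num
  have hne : a + k * a ≠ 3 * r + 6 := by
    intro heq
    have := mul_eq_of_add_mul_eq_three_mul_add_six ha.ne' hr2 heq
    rcases hk with rfl | rfl | rfl | rfl <;> omega
  have hab : a < k * a := by nlinarith [show 1 < k by omega]
  exact third_element_of_a_ka_triple_is_c_nu_general ha hab hc hr hr2 hlt hne hac hbc
end

section
/- For a positive integer a, the set {1, 5, a, 7a} is a D(4)-quadruple if and only if a = 96. -/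
/-!
If `a + 4 = x²` and `5a + 4 = y²`, then `y² + 16 = 5x²`, a Pell-type equation whose solutions have
`x = 2Fₘ` with `m` odd. Applied to `a` and to `7a`, this gives `a + 4 = 4Fₘ²` and `7a + 4 = 4Fₙ²`,
whence `Fₙ² + 6 = 7Fₘ²` with `m`, `n` odd. Growth of the Fibonacci numbers leaves only
`Fₘ = Fₙ = 1` and `n = m + 2`; in the latter case Cassini's identity, in the form
`Fₘ² + Fₘ₊₂² + 1 = 3FₘFₘ₊₂`, turns the equation into `(Fₘ² - 1)(Fₘ² - 25) = 0`.
-/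

open Nat (fib fib_add_two)

lemma fib_sq_add_fib_add_two_sq_of_odd {n : ℕ} (hn : Odd n) :
    fib n ^ 2 + fib (n + 2) ^ 2 + 1 = 3 * fib n * fib (n + 2) := by
  have cassini : (fib (n + 2) * fib n - fib (n + 1) ^ 2 : ℤ) = 1 := by
    have h := Int.fib_succ_mul_fib_pred_sub_fib_sq (n + 1 : ℕ)
    rw [Int.natAbs_natCast, hn.add_one.neg_one_pow] at h
    simpa [add_assoc, ← Int.fib_natCast] using h
  have hrec : fib (n + 2) = fib n + fib (n + 1) := fib_add_two
  zify at hrec ⊢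
  grind

lemma five_mul_fib_le_fib_add_four (n : ℕ) : 5 * fib n ≤ fib (n + 4) := by
  grind [fib_add_two, Nat.fib_le_fib_succ (n := n)]

lemma fib_sq_eq_one_or_eq_twenty_five_of_odd {m n : ℕ} (hm : Odd m) (hn : Odd n)
    (h : fib n ^ 2 + 6 = 7 * fib m ^ 2) : fib m ^ 2 = 1 ∨ fib m ^ 2 = 25 := by
  obtain hnm | rfl | hmn : n ≤ m ∨ n = m + 2 ∨ m + 4 ≤ n := by grind
  · have hle : fib n ≤ fib m := Nat.fib_mono hnm
    have hpos : 0 < fib m := Nat.fib_pos.2 hm.pos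
    left
    nlinarith [hle, hpos]
  · have hquad : fib m ^ 2 + fib (m + 2) ^ 2 + 1 = 3 * fib m * fib (m + 2) :=
      fib_sq_add_fib_add_two_sq_of_odd hm
    have hprod : 3 * fib m * fib (m + 2) + 5 = 8 * fib m ^ 2 := by omega
    have hfac : (fib m ^ 2 - 1 : ℤ) * (fib m ^ 2 - 25) = 0 := by
      zify at h hprod
      grind
    zify
    simpa [sub_eq_zero] using hfac
  · have hle : 5 * fib m ≤ fib n :=
      (five_mul_fib_le_fib_add_four m).trans (Nat.fib_mono hmn)
    nlinarith

lemma exists_eq_two_mul_fib_of_sq_add_sixteen_eq {x y : ℕ} (h : y ^ 2 + 16 = 5 * x ^ 2) :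
    ∃ n, Odd n ∧ x = 2 * fib n ∧ x + y = 4 * fib (n + 1) := by
  induction x using Nat.strong_induction_on generalizing y with
  | _ x ih =>
    obtain hx | hx : x ≤ 2 ∨ 2 < x := le_or_gt x 2
    · obtain ⟨rfl, rfl⟩ : x = 2 ∧ y = 2 := by
        have hy : y ≤ 2 := by nlinarith
        interval_cases x <;> interval_cases y <;> simp_all
      exact ⟨1, by simp⟩
    · have hparity : Even (x + y) := by
        have heven : Even (y ^ 2 + 16) ↔ Even (5 * x ^ 2) := by rw [h]
        grind [Nat.even_pow]
      have hyx : y < 3 * x := by nlinarith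
      have hxy : 5 * x < 3 * y := by nlinarith
      -- Descend by `v + u√5 = (y + x√5) * (3 - √5) / 2`.
      obtain ⟨u, hu⟩ : ∃ u, 3 * x = y + 2 * u := ⟨(3 * x - y) / 2, by grind⟩
      obtain ⟨v, hv⟩ : ∃ v, 3 * y = 5 * x + 2 * v := ⟨(3 * y - 5 * x) / 2, by grind⟩
      have huv : v ^ 2 + 16 = 5 * u ^ 2 := by
        zify at h hu hv ⊢
        grind
      obtain ⟨n, hn, hu', huv'⟩ := ih u (by omega) huv
      exact ⟨n + 2, by grind, by grind [fib_add_two], by grind [fib_add_two]⟩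

lemma exists_add_four_eq_four_mul_fib_sq {a : ℤ} (h₁ : IsSquare (a + 4))
    (h₅ : IsSquare (5 * a + 4)) : ∃ n, Odd n ∧ a + 4 = 4 * (fib n : ℤ) ^ 2 := by
  obtain ⟨x, hx⟩ := h₁
  obtain ⟨y, hy⟩ := h₅
  have hxy : y.natAbs ^ 2 + 16 = 5 * x.natAbs ^ 2 := by
    zify
    rw [sq_abs, sq_abs]
    linarith
  obtain ⟨n, hn, hx', -⟩ := exists_eq_two_mul_fib_of_sq_add_sixteen_eq hxy
  refine ⟨n, hn, ?_⟩
  rw [hx, ← Int.natAbs_mul_self' x, hx']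
  push_cast
  ring

theorem one_five_a_sevena_quadruple_iff_general (a : ℤ) :
    IsSquare (a + 4) ∧ IsSquare (5 * a + 4) ∧
      IsSquare (7 * a + 4) ∧ IsSquare (5 * (7 * a) + 4) ↔ a = 0 ∨ a = 96 := by
  constructor
  · rintro ⟨h₁, h₅, h₇, h₃₅⟩
    obtain ⟨m, hm, ham⟩ := exists_add_four_eq_four_mul_fib_sq h₁ h₅
    obtain ⟨n, hn, han⟩ := exists_add_four_eq_four_mul_fib_sq h₇ h₃₅
    have hmn : fib n ^ 2 + 6 = 7 * fib m ^ 2 := by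
      zify
      linarith
    have hfib := fib_sq_eq_one_or_eq_twenty_five_of_odd hm hn hmn
    zify at hfib
    omega
  · rintro (rfl | rfl)
    · exact ⟨⟨2, rfl⟩, ⟨2, rfl⟩, ⟨2, rfl⟩, ⟨2, rfl⟩⟩
    · exact ⟨⟨10, rfl⟩, ⟨22, rfl⟩, ⟨26, rfl⟩, ⟨58, rfl⟩⟩

/-- For a positive integer `a`, `{1, 5, a, 7a}` is a `D(4)`-quadruple iff `a = 96`. -/
theorem one_five_a_sevena_quadruple_iff (a : ℤ) (ha : 0 < a) :
    IsD4Quadruple 1 5 a (7 * a) ↔ a = 96 := by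
  refine ⟨fun h => ?_, by rintro rfl; norm_num [IsD4Quadruple]⟩
  have hsq := (one_five_a_sevena_quadruple_iff_general a).1 (by grind [IsD4Quadruple])
  exact hsq.resolve_left ha.ne'
end

section
/- For a positive integer a, the set {1, 5, a, 8a} is a D(4)-quadruple if and only if a = 12. -/
/-!
Since `8a + 4 = 4(2a + 1)` and `40a + 4 = 4(10a + 1)`, both `g = a` and `g = 5a` make `g + 4` and
`2g + 1` squares. Such `g` come from `U² - 2X² = -7`, hence form a two-sided sequence `g_m`
indexed by the powers of the unit `ε = 3 + 2√2`, with `g₀ = 0` and `g₋₁ = 12`. Write `a = g_m` and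
`5a = g_n`. Modulo `8` one sees that `m` and `n` have the same parity.

If `m` and `r` are distinct of the same parity, then `m - r = 2^i j` with `i ≥ 1` and `j` odd, and
`ε^(2m) ≡ -ε^(2r)` modulo the rational part `T` of `ε^(2^i)`, so that `T ∣ 2(g_m + g_r) + 9`.
For even `n ≠ 0` the choice `r = 0` makes `-5` a square modulo `T`; for odd `m ≠ -1` the choice
`r = -1` makes `-41` a square modulo `T`. Both contradict quadratic reciprocity, because
`T` is `1` modulo `4` and a nonresidue modulo `5` and `41`.
-/

open Pell NumberTheorySymbols

theorem isSquare_of_isSquare_sq_mul {b c : ℤ} (hc : c ≠ 0) (h : IsSquare (c ^ 2 * b)) :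
    IsSquare b := by
  obtain ⟨r, hr⟩ := isSquare_iff_exists_sq _ |>.mp h
  obtain ⟨k, rfl⟩ : c ∣ r := (Int.pow_dvd_pow_iff two_ne_zero).mp ⟨b, hr.symm⟩
  rw [mul_pow] at hr
  exact isSquare_iff_exists_sq _ |>.mpr ⟨k, mul_left_cancel₀ (pow_ne_zero 2 hc) hr⟩

theorem exists_two_pow_succ_mul_odd {n : ℤ} (hn : n ≠ 0) (heven : Even n) :
    ∃ (i : ℕ) (j : ℤ), Odd j ∧ n = 2 ^ (i + 1) * j := by
  obtain ⟨k, rfl⟩ := heven.two_dvd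
  have finite : FiniteMultiplicity 2 k :=
    Int.finiteMultiplicity_iff.mpr ⟨by decide, right_ne_zero_of_mul hn⟩
  obtain ⟨j, hk, hj⟩ := finite.exists_eq_pow_mul_and_not_dvd
  refine ⟨multiplicity 2 k, j, by rwa [← Int.not_even_iff_odd, even_iff_two_dvd], ?_⟩
  rw [pow_succ', mul_assoc, ← hk]

theorem not_dvd_sq_add_four_mul_of_jacobiSym_eq_neg_one {p t : ℕ} (hp : p % 4 = 1)
    (ht : t % 4 = 1) (hj : J(t | p) = -1) (w : ℤ) : ¬ (t : ℤ) ∣ w ^ 2 + 4 * p := by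
  intro hdvd
  have t_odd : Odd t := Nat.odd_iff.mpr (by lia)
  have w_sq_eq : J(-(4 * p) | t) = J(w ^ 2 | t) :=
    jacobiSym.mod_left' (Int.modEq_iff_dvd.mpr (by rwa [sub_neg_eq_add]))
  have nonresidue : J(-(4 * p) | t) = -1 := by
    rw [jacobiSym.neg _ t_odd, ZMod.χ₄_nat_one_mod_four ht, jacobiSym.mul_left,
      jacobiSym.at_four t_odd, jacobiSym.quadratic_reciprocity_one_mod_four hp t_odd, hj]
    norm_num
  rw [nonresidue, jacobiSym.pow_left] at w_sq_eq
  linarith [sq_nonneg J(w | t)]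

section PellCongruences

variable {d : ℤ}

theorem pell_x_sq (δ : Solution₁ d) : (δ ^ 2).x = 2 * δ.x ^ 2 - 1 := by
  rw [sq, Solution₁.x_mul]
  linear_combination -δ.prop

theorem pell_y_sq (δ : Solution₁ d) : (δ ^ 2).y = 2 * δ.x * δ.y := by
  rw [sq, Solution₁.y_mul]
  ring

theorem pell_x_dvd_sq_add_one (δ : Solution₁ d) : (δ.x : ℤ√d) ∣ (δ : ℤ√d) ^ 2 + 1 := by
  have re_eq : ((δ : ℤ√d) ^ 2).re = 2 * δ.x ^ 2 - 1 := pell_x_sq δ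
  have im_eq : ((δ : ℤ√d) ^ 2).im = 2 * δ.x * δ.y := pell_y_sq δ
  rw [Zsqrtd.intCast_dvd, Zsqrtd.re_add, Zsqrtd.im_add, re_eq, im_eq, Zsqrtd.re_one, Zsqrtd.im_one]
  exact ⟨⟨2 * δ.x, by ring⟩, ⟨2 * δ.y, by ring⟩⟩

theorem pell_x_dvd_pow_two_mul_odd (δ : Solution₁ d) {j : ℕ} (hj : Odd j) :
    δ.x ∣ (δ ^ (2 * j)).x + 1 ∧ δ.x ∣ (δ ^ (2 * j)).y := by
  have sq_add_one_dvd : (δ : ℤ√d) ^ 2 + 1 ∣ (δ : ℤ√d) ^ (2 * j) + 1 := by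
    simpa only [one_pow, pow_mul] using hj.add_dvd_pow_add_pow ((δ : ℤ√d) ^ 2) 1
  have x_dvd := (Zsqrtd.intCast_dvd _ _).mp ((pell_x_dvd_sq_add_one δ).trans sq_add_one_dvd)
  rwa [Zsqrtd.re_add, Zsqrtd.im_add, Zsqrtd.re_one, Zsqrtd.im_one, add_zero] at x_dvd

theorem pell_x_dvd_zpow_two_mul_odd (δ : Solution₁ d) {j : ℤ} (hj : Odd j) :
    δ.x ∣ (δ ^ (2 * j)).x + 1 ∧ δ.x ∣ (δ ^ (2 * j)).y := by
  obtain ⟨k, rfl | rfl⟩ := j.eq_nat_or_neg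
  · exact_mod_cast pell_x_dvd_pow_two_mul_odd δ (by simpa using hj)
  · have inv_dvd := pell_x_dvd_pow_two_mul_odd δ⁻¹ (j := k) (by simpa using hj)
    rw [Solution₁.x_inv] at inv_dvd
    rw [mul_neg, zpow_neg, ← inv_zpow]
    exact_mod_cast inv_dvd

end PellCongruences

/-- The fundamental solution `3 + 2√2` of `x² - 2y² = 1`, called `ε` above. -/
def pellUnit : Solution₁ 2 := Solution₁.mk 3 2 (by norm_num)

theorem isFundamental_pellUnit : IsFundamental pellUnit := by
  refine ⟨by simp [pellUnit], by simp [pellUnit], fun {β} hβ ↦ ?_⟩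
  have norm_eq := β.prop
  change 3 ≤ β.x
  by_contra! hlt
  have x_eq : β.x = 2 := by lia
  rw [x_eq] at norm_eq
  lia

theorem odd_pell_two_x (β : Solution₁ 2) : Odd β.x := by
  have x_sq_odd : Odd (β.x ^ 2) := ⟨β.y ^ 2, by rw [β.prop_x]; ring⟩
  exact Int.odd_pow' two_ne_zero |>.mp x_sq_odd

theorem even_pell_two_y (β : Solution₁ 2) : Even β.y := by
  have y_sq_even : Even (β.y ^ 2) := by
    obtain ⟨k, hk⟩ := odd_pell_two_x β
    have norm_eq := β.prop
    rw [hk] at norm_eq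
    exact ⟨k ^ 2 + k, by linarith⟩
  exact Int.even_pow' two_ne_zero |>.mp y_sq_even

theorem four_dvd_pellUnit_zpow_y_iff (m : ℤ) : 4 ∣ (pellUnit ^ m).y ↔ Even m := by
  have four_dvd_sq_y (β : Solution₁ 2) : 4 ∣ (β ^ 2).y := by
    obtain ⟨k, hk⟩ := even_pell_two_y β
    exact ⟨β.x * k, by rw [pell_y_sq, hk]; ring⟩
  obtain ⟨k, rfl | rfl⟩ := m.even_or_odd'
  · simpa [mul_comm 2 k, zpow_mul] using four_dvd_sq_y (pellUnit ^ k)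
  · have y_succ : (pellUnit ^ (2 * k + 1)).y
        = 2 * ((pellUnit ^ k) ^ 2).x + 3 * ((pellUnit ^ k) ^ 2).y := by
      rw [zpow_add_one, mul_comm 2 k, zpow_mul, zpow_ofNat, Solution₁.y_mul]
      simp only [pellUnit, Solution₁.x_mk, Solution₁.y_mk]
      ring
    have four_dvd := four_dvd_sq_y (pellUnit ^ k)
    have x_odd := Int.odd_iff.mp (odd_pell_two_x ((pellUnit ^ k) ^ 2))
    rw [y_succ, Int.even_iff]
    lia

-- `820 = 4 * 5 * 41` collects the moduli needed for reciprocity at `5` and `41`.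
theorem pellUnit_pow_two_pow_x_emod (i : ℕ) :
    (pellUnit ^ 2 ^ (i + 1)).x % 820 = 17 ∨ (pellUnit ^ 2 ^ (i + 1)).x % 820 = 577 := by
  induction i with
  | zero => left; rw [zero_add, pow_one, pell_x_sq]; simp [pellUnit]
  | succ i ih =>
    rw [pow_succ 2 (i + 1), pow_mul, pell_x_sq]
    rcases ih with h | h <;> simp [Int.sub_emod, Int.mul_emod, pow_two, h]

/-- The integer `g` with `g + 4 = X²` and `2g + 1 = U²`, where `U + X√2` is the element
`(1 + 2√2)(x + y√2)` of norm `-7`. Its value at `ε^m` is `g_m` above. -/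
def pellValue (β : Solution₁ 2) : ℤ := (2 * β.x + β.y) ^ 2 - 4

theorem four_mul_pellValue_add_nine (β : Solution₁ 2) :
    4 * pellValue β + 9 = 9 * (β ^ 2).x + 8 * (β ^ 2).y := by
  rw [pell_x_sq, pell_y_sq, pellValue]
  linear_combination -2 * β.prop

theorem pellValue_neg (β : Solution₁ 2) : pellValue (-β) = pellValue β := by
  simp only [pellValue, Solution₁.x_neg, Solution₁.y_neg]
  ring

theorem pellValue_one : pellValue 1 = 0 := by
  simp [pellValue]

theorem pellValue_pellUnit_inv : pellValue pellUnit⁻¹ = 12 := by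
  simp [pellValue, pellUnit]

theorem eight_dvd_pellValue_iff (β : Solution₁ 2) : 8 ∣ pellValue β ↔ 4 ∣ β.y := by
  obtain ⟨k, hk⟩ := odd_pell_two_x β
  obtain ⟨l, hl⟩ := even_pell_two_y β
  have value_eq : pellValue β = 8 * (2 * (k ^ 2 + k) + (2 * k + 1) * l) + 4 * l ^ 2 := by
    rw [pellValue, hk, hl]
    ring
  have l_sq_even : Even (l ^ 2) ↔ Even l := Int.even_pow' two_ne_zero
  rw [Int.even_iff, Int.even_iff] at l_sq_even
  lia

theorem exists_pellValue_eq_of_seven_dvd {g X U : ℤ} (hX : g + 4 = X ^ 2)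
    (hU : 2 * g + 1 = U ^ 2) (h7 : 7 ∣ 4 * X - U) : ∃ β, pellValue β = g := by
  obtain ⟨p, hp⟩ := h7
  obtain rfl : U = 4 * X - 7 * p := by linarith
  refine ⟨Solution₁.mk p (X - 2 * p) (by linarith), ?_⟩
  rw [pellValue, Solution₁.x_mk, Solution₁.y_mk]
  linear_combination -hX

-- The prime `7 = -(1 + 2√2)(1 - 2√2)` splits, and the sign of `U` can be chosen so that `1 + 2√2`
-- divides `U + X√2`.
theorem exists_pellValue_eq {g X U : ℤ} (hX : g + 4 = X ^ 2) (hU : 2 * g + 1 = U ^ 2) :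
    ∃ β, pellValue β = g := by
  have seven_dvd_mul : (7 : ℤ) ∣ (4 * X - U) * (4 * X + U) :=
    ⟨2 * X ^ 2 + 1, by linear_combination hU - 2 * hX⟩
  rcases (by norm_num : Prime (7 : ℤ)).dvd_or_dvd seven_dvd_mul with h7 | h7
  · exact exists_pellValue_eq_of_seven_dvd hX hU h7
  · exact exists_pellValue_eq_of_seven_dvd (U := -U) hX (by rw [hU, neg_sq]) (by simpa using h7)

theorem exists_pellValue_zpow_eq {g : ℤ} (hg : IsSquare (g + 4)) (hg' : IsSquare (2 * g + 1)) :
    ∃ m : ℤ, pellValue (pellUnit ^ m) = g := by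
  obtain ⟨X, hX⟩ := isSquare_iff_exists_sq _ |>.mp hg
  obtain ⟨U, hU⟩ := isSquare_iff_exists_sq _ |>.mp hg'
  obtain ⟨β, rfl⟩ := exists_pellValue_eq hX hU
  obtain ⟨m, rfl | rfl⟩ := isFundamental_pellUnit.eq_zpow_or_neg_zpow β
  · exact ⟨m, rfl⟩
  · exact ⟨m, (pellValue_neg _).symm⟩

theorem pell_x_dvd_pellValue_mul_zpow_add (β δ : Solution₁ 2) {j : ℤ} (hj : Odd j) :
    δ.x ∣ 2 * (pellValue (β * δ ^ j) + pellValue β) + 9 := by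
  obtain ⟨⟨k, hk⟩, ⟨l, hl⟩⟩ := pell_x_dvd_zpow_two_mul_odd δ hj
  have x_coprime_two : IsCoprime δ.x 2 := Int.isCoprime_two_right.mpr (odd_pell_two_x δ)
  refine x_coprime_two.dvd_of_dvd_mul_left ⟨(9 * (β ^ 2).x + 8 * (β ^ 2).y) * k
    + (18 * (β ^ 2).y + 8 * (β ^ 2).x) * l, ?_⟩
  have shifted := four_mul_pellValue_add_nine (β * δ ^ j)
  rw [mul_pow, ← zpow_natCast (δ ^ j), ← zpow_mul, mul_comm j, Nat.cast_ofNat,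
    Solution₁.x_mul, Solution₁.y_mul] at shifted
  linear_combination shifted + four_mul_pellValue_add_nine β
    + (9 * (β ^ 2).x + 8 * (β ^ 2).y) * hk + (18 * (β ^ 2).y + 8 * (β ^ 2).x) * hl

theorem exists_pellUnit_x_dvd_pellValue_add {m r : ℤ} (hne : m ≠ r) (heven : Even (m - r)) :
    ∃ i : ℕ, (pellUnit ^ 2 ^ (i + 1)).x ∣
      2 * (pellValue (pellUnit ^ m) + pellValue (pellUnit ^ r)) + 9 := by
  obtain ⟨i, j, hj, hmr⟩ := exists_two_pow_succ_mul_odd (sub_ne_zero.mpr hne) heven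
  have zpow_eq : pellUnit ^ m = pellUnit ^ r * (pellUnit ^ 2 ^ (i + 1)) ^ j := by
    rw [← zpow_natCast pellUnit, ← zpow_mul, ← zpow_add]
    congr 1
    push_cast
    linarith
  exact ⟨i, zpow_eq ▸ pell_x_dvd_pellValue_mul_zpow_add _ _ hj⟩

theorem not_pellUnit_x_dvd_sq_add {p : ℕ} (hp : p = 5 ∨ p = 41) (i : ℕ) (w : ℤ) :
    ¬ (pellUnit ^ 2 ^ (i + 1)).x ∣ w ^ 2 + 4 * p := by
  have x_emod := pellUnit_pow_two_pow_x_emod i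
  have x_pos := Solution₁.x_pow_pos isFundamental_pellUnit.x_pos (2 ^ (i + 1))
  lift (pellUnit ^ 2 ^ (i + 1)).x to ℕ using x_pos.le with t
  apply not_dvd_sq_add_four_mul_of_jacobiSym_eq_neg_one
  · lia
  · lia
  · rw [jacobiSym.mod_left]
    rcases hp with rfl | rfl
    · rw [show (t : ℤ) % (5 : ℕ) = 2 by lia]
      norm_num
    · obtain h | h : (t : ℤ) % (41 : ℕ) = 17 ∨ (t : ℤ) % (41 : ℕ) = 3 := by lia
      all_goals rw [h]; norm_num

theorem eq_zero_of_even_of_pellValue_zpow_eq_five_mul {a n : ℤ} (hsq : IsSquare (2 * a + 1))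
    (hn : Even n) (hval : pellValue (pellUnit ^ n) = 5 * a) : n = 0 := by
  by_contra hne
  obtain ⟨u, hu⟩ := isSquare_iff_exists_sq _ |>.mp hsq
  obtain ⟨i, hdvd⟩ := exists_pellUnit_x_dvd_pellValue_add hne (by simpa using hn)
  rw [hval, zpow_zero, pellValue_one] at hdvd
  refine not_pellUnit_x_dvd_sq_add (.inl rfl) i (5 * u) ?_
  have value_eq : (5 * u) ^ 2 + 4 * (5 : ℕ) = 5 * (2 * (5 * a + 0) + 9) := by
    push_cast
    linear_combination -25 * hu
  exact value_eq ▸ hdvd.mul_left 5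

theorem eq_neg_one_of_odd_of_pellValue_zpow_eq {a m : ℤ} (hsq : IsSquare (10 * a + 1))
    (hm : Odd m) (hval : pellValue (pellUnit ^ m) = a) : m = -1 := by
  by_contra hne
  obtain ⟨w, hw⟩ := isSquare_iff_exists_sq _ |>.mp hsq
  obtain ⟨i, hdvd⟩ := exists_pellUnit_x_dvd_pellValue_add hne (hm.sub_odd (by decide))
  rw [hval, zpow_neg_one, pellValue_pellUnit_inv] at hdvd
  refine not_pellUnit_x_dvd_sq_add (.inr rfl) i w ?_
  have value_eq : w ^ 2 + 4 * (41 : ℕ) = 5 * (2 * (a + 12) + 9) := by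
    push_cast
    linear_combination -hw
  exact value_eq ▸ hdvd.mul_left 5

theorem eq_zero_or_eq_twelve_of_isSquare {a : ℤ} (h₁ : IsSquare (a + 4))
    (h₂ : IsSquare (2 * a + 1)) (h₅ : IsSquare (5 * a + 4)) (h₁₀ : IsSquare (10 * a + 1)) :
    a = 0 ∨ a = 12 := by
  obtain ⟨m, hm⟩ := exists_pellValue_zpow_eq h₁ h₂
  obtain ⟨n, hn⟩ := exists_pellValue_zpow_eq (g := 5 * a) h₅ (by rwa [← mul_assoc])
  have same_parity : Even m ↔ Even n := by
    rw [← four_dvd_pellUnit_zpow_y_iff, ← four_dvd_pellUnit_zpow_y_iff,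
      ← eight_dvd_pellValue_iff, ← eight_dvd_pellValue_iff, hm, hn]
    lia
  rcases m.even_or_odd with m_even | m_odd
  · left
    have n_eq := eq_zero_of_even_of_pellValue_zpow_eq_five_mul h₂ (same_parity.mp m_even) hn
    rw [n_eq, zpow_zero, pellValue_one] at hn
    lia
  · right
    have m_eq := eq_neg_one_of_odd_of_pellValue_zpow_eq h₁₀ m_odd hm
    rw [← hm, m_eq, zpow_neg_one, pellValue_pellUnit_inv]

/-- For a positive integer `a`, `{1, 5, a, 8a}` is a `D(4)`-quadruple iff `a = 12`. -/
theorem one_five_a_eighta_quadruple_iff (a : ℤ) (ha : 0 < a) :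
    IsD4Quadruple 1 5 a (8 * a) ↔ a = 12 := by
  constructor
  · rintro ⟨-, -, -, -, -, -, -, -, -, -, -, h₁, h₈, h₅, h₄₀, -⟩
    have h₂ : IsSquare (2 * a + 1) :=
      isSquare_of_isSquare_sq_mul two_ne_zero (by convert h₈ using 1; ring)
    have h₁₀ : IsSquare (10 * a + 1) :=
      isSquare_of_isSquare_sq_mul two_ne_zero (by convert h₄₀ using 1; ring)
    exact (eq_zero_or_eq_twelve_of_isSquare (by simpa using h₁) h₂ h₅ h₁₀).resolve_left ha.ne'
  · rintro rfl
    norm_num [IsD4Quadruple]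
end

section
/- Let k ∈ {7, 8, 10, 11, 12, 13} and let a be a positive integer with k·a² + 4 = r² a perfect square. Set b = ka, c = a + b − 2r and s = r − a (so that ac + 4 = s² and bc + 4 = (b − r)²), and assume a < c < b. Consider a solution of Type 1, i.e. (x₂, y₂) = (2, ±2) and (x₀, z₀) = (2, ±2). If P_l = Q_m for some integers l ≥ 1 and m ≥ 1, then 0 < Λ' < 2.6·α^{−2l}, where Λ' = m·log β − l·log α + log γ'. -/
/-!
With `t = √a / √b`, the closed form of a Type 1 sequence is `P l = p + (1 - a / b) / p`, where
`p = (1 ± t) α ^ l`. Likewise `Q m = q + (1 - a / c) / q` with `q = (1 ± √a / √c) β ^ m`, and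
`Λ' = log (q / p)`. Since `c < b`, the equation `P l = Q m` forces `p < q` as soon as
`1 - a / c < p q`, which holds because `p ≥ 5 / 4` and `β ≥ 8 / 5`; it also gives
`q < p + (1 - a / b) / p`. Hence `0 < Λ' < (1 - a / b) / p ^ 2 ≤ (1 + t) / (1 - t) * α ^ (-2 l)`,
and `t ≤ 4 / 9` makes the constant at most `13 / 5`.
-/

open Real

lemma eq_add_of_recurrence {R : Type*} [CommRing R] {x x' u v : R} {X : ℕ → R}
    (h0 : X 0 = u + v) (h1 : X 1 = u * x + v * x')
    (hrec : ∀ i, X (i + 2) = (x + x') * X (i + 1) - x * x' * X i) (n : ℕ) :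
    X n = u * x ^ n + v * x' ^ n := by
  induction n using Nat.twoStepInduction with
  | zero => simpa using h0
  | one => simpa using h1
  | more n ih ih' => rw [hrec, ih, ih']; ring

section Comparison

variable {p q A C : ℝ}

lemma lt_of_add_div_eq_add_div (hp : 0 < p) (hq : 0 < q) (hCA : C < A) (hpq : C < p * q)
    (h : p + A / p = q + C / q) : p < q := by
  have factored : (q - p) * (p * q - C) = (A - C) * q := by
    field_simp at h
    linear_combination -h
  have rhs_pos : 0 < (A - C) * q := mul_pos (sub_pos.2 hCA) hq
  rw [← factored] at rhs_pos
  exact sub_pos.1 (pos_of_mul_pos_left rhs_pos (sub_pos.2 hpq).le)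

lemma log_div_lt_of_add_div_eq_add_div (hp : 0 < p) (hq : 0 < q) (hC : 0 < C)
    (h : p + A / p = q + C / q) : log (q / p) < A / p ^ 2 := by
  have q_lt : q < p + A / p := by rw [h]; exact lt_add_of_pos_right q (div_pos hC hq)
  calc log (q / p) ≤ q / p - 1 := log_le_sub_one_of_pos (div_pos hq hp)
    _ < (p + A / p) / p - 1 := by gcongr
    _ = A / p ^ 2 := by field_simp; ring

end Comparison

/-- The larger root of `x ^ 2 - r x + 1` when `r ^ 2 = a b + 4`. It is the paper's `α` for the pair
`(a, b)`, and its `β` for the pair `(a, c)` with `s` in place of `r`. -/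
noncomputable def pellRoot (a b r : ℝ) : ℝ := (r + √(a * b)) / 2

/-- The coefficient of `pellRoot a b r ^ n` in the closed form of the Type 1 sequence with initial
pair `(2, y)`; the coefficient of the inverse root is obtained by changing the sign of `y`. The
paper's `γ'` is the quotient of two of these. -/
noncomputable def leadCoeff (a b y : ℝ) : ℝ := 1 + y / 2 * (√a / √b)

/-- The dominant term of the closed form of the Type 1 sequence with initial pair `(2, y)`. -/
noncomputable def dominantTerm (a b r y : ℝ) (n : ℕ) : ℝ := leadCoeff a b y * pellRoot a b r ^ n

/-- The paper's `Λ'` for the solutions of Type 1 with initial pairs `(2, y)` and `(2, z)`. -/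
noncomputable def typeOneLinearForm (a b c r s y z : ℝ) (l m : ℕ) : ℝ :=
  m * log (pellRoot a c s) - l * log (pellRoot a b r) +
    log (√b * (z * √a + 2 * √c) / (√c * (y * √a + 2 * √b)))

/-- The sequence `P` (or, with `s` for `r`, the sequence `Q`) attached to a solution of Type 1, that
is, with initial pair `(2, y)`. The intended values of `y` are `2` and `-2`. -/
structure IsTypeOneSeq (a r y : ℝ) (X : ℕ → ℝ) : Prop where
  zero : X 0 = 2
  one : 2 * X 1 = r * 2 + a * y
  recurrence : ∀ i, X (i + 2) = r * X (i + 1) - X i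

lemma isTypeOneSeq_intCast {a r y : ℤ} {X : ℕ → ℤ} (h0 : X 0 = 2)
    (h1 : 2 * X 1 = r * 2 + a * y) (hrec : ∀ i, X (i + 2) = r * X (i + 1) - X i) :
    IsTypeOneSeq a r y (fun n ↦ X n) where
  zero := by exact_mod_cast h0
  one := by exact_mod_cast h1
  recurrence i := by exact_mod_cast hrec i

section PellRoot

variable {a b r : ℝ}

lemma inv_pellRoot (hab : 0 ≤ a * b) (hr : r ^ 2 = a * b + 4) :
    (pellRoot a b r)⁻¹ = (r - √(a * b)) / 2 := by
  refine inv_eq_of_mul_eq_one_right ?_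
  unfold pellRoot
  linear_combination hr / 4 - sq_sqrt hab / 4

lemma sqrt_mul_lt_pellRoot (hr : 0 < r) (hr2 : r ^ 2 = a * b + 4) : √(a * b) < pellRoot a b r := by
  have sqrt_lt_r : √(a * b) < r := (sqrt_lt' hr).2 (by linarith)
  unfold pellRoot
  linarith

lemma pellRoot_pos (hr : 0 < r) : 0 < pellRoot a b r := by
  unfold pellRoot
  positivity

lemma eight_fifths_le_pellRoot (hab : 1 ≤ a * b) (hr : 0 < r) (hr2 : r ^ 2 = a * b + 4) :
    8 / 5 ≤ pellRoot a b r := by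
  have one_le_sqrt : 1 ≤ √(a * b) := Real.one_le_sqrt.2 hab
  have le_r : 11 / 5 ≤ r := le_of_sq_le_sq (by linarith) hr.le
  unfold pellRoot
  linarith

end PellRoot

section LeadCoeff

variable {a b y : ℝ}

lemma sqrt_div_sqrt_sq (ha : 0 ≤ a) (hb : 0 ≤ b) : (√a / √b) ^ 2 = a / b := by
  rw [div_pow, sq_sqrt ha, sq_sqrt hb]

lemma leadCoeff_mul_leadCoeff_neg (ha : 0 ≤ a) (hb : 0 ≤ b) (hy : |y| = 2) :
    leadCoeff a b y * leadCoeff a b (-y) = 1 - a / b := by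
  have y_sq : y ^ 2 = 4 := by rw [← sq_abs, hy]; norm_num
  unfold leadCoeff
  linear_combination (-(√a / √b) ^ 2 / 4) * y_sq - sqrt_div_sqrt_sq ha hb

lemma one_sub_sqrt_div_le_leadCoeff (hy : |y| = 2) : 1 - √a / √b ≤ leadCoeff a b y := by
  have neg_one_le : -1 ≤ y / 2 := by linarith [neg_abs_le y]
  have ratio_nonneg : 0 ≤ √a / √b := by positivity
  unfold leadCoeff
  linarith [mul_le_mul_of_nonneg_right neg_one_le ratio_nonneg]

lemma sqrt_div_sqrt_lt_one (hb : 0 < b) (hab : a < b) : √a / √b < 1 := by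
  rw [div_lt_one (sqrt_pos.2 hb)]
  exact Real.sqrt_lt_sqrt_iff_of_pos hb |>.2 hab

lemma leadCoeff_pos (hb : 0 < b) (hab : a < b) (hy : |y| = 2) : 0 < leadCoeff a b y :=
  (sub_pos.2 (sqrt_div_sqrt_lt_one hb hab)).trans_le (one_sub_sqrt_div_le_leadCoeff hy)

lemma sqrt_div_sqrt_le_four_ninths (hb : 0 < b) (hab : 81 * a ≤ 16 * b) : √a / √b ≤ 4 / 9 := by
  rw [← sqrt_div' a hb.le]
  refine (sqrt_le_left (by norm_num)).2 ?_
  rw [div_le_iff₀ hb]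
  linarith

end LeadCoeff

section DominantTerm

variable {a b r y : ℝ} {n : ℕ}

lemma dominantTerm_pos (hb : 0 < b) (hab : a < b) (hr : 0 < r) (hy : |y| = 2) :
    0 < dominantTerm a b r y n :=
  mul_pos (leadCoeff_pos hb hab hy) (pow_pos (pellRoot_pos hr) n)

lemma one_sub_mul_pellRoot_pow_le_dominantTerm (hr : 0 < r) (hy : |y| = 2) :
    (1 - √a / √b) * pellRoot a b r ^ n ≤ dominantTerm a b r y n :=
  mul_le_mul_of_nonneg_right (one_sub_sqrt_div_le_leadCoeff hy) (pow_pos (pellRoot_pos hr) n).le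

lemma one_sub_mul_pellRoot_le_dominantTerm (hb : 0 < b) (hab : a < b) (hone : 1 ≤ a * b)
    (hr : 0 < r) (hr2 : r ^ 2 = a * b + 4) (hy : |y| = 2) (hn : 1 ≤ n) :
    (1 - √a / √b) * pellRoot a b r ≤ dominantTerm a b r y n := by
  have root_le_pow : pellRoot a b r ≤ pellRoot a b r ^ n :=
    le_self_pow₀ (by linarith [eight_fifths_le_pellRoot hone hr hr2]) (by lia)
  exact (mul_le_mul_of_nonneg_left root_le_pow
    (sub_pos.2 (sqrt_div_sqrt_lt_one hb hab)).le).trans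
    (one_sub_mul_pellRoot_pow_le_dominantTerm hr hy)

lemma five_fourths_le_dominantTerm (ha : 1 ≤ a) (hab : 81 * a ≤ 16 * b) (hr : 0 < r)
    (hr2 : r ^ 2 = a * b + 4) (hy : |y| = 2) (hn : 1 ≤ n) : 5 / 4 ≤ dominantTerm a b r y n := by
  have hb : 0 < b := by linarith
  have ratio_le : √a / √b ≤ 4 / 9 := sqrt_div_sqrt_le_four_ninths hb hab
  have root_ge : 9 / 4 ≤ pellRoot a b r := by
    refine le_trans (le_sqrt_of_sq_le ?_) (sqrt_mul_lt_pellRoot hr hr2).le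
    nlinarith
  calc (5 / 4 : ℝ) = (1 - 4 / 9) * (9 / 4) := by norm_num
    _ ≤ (1 - √a / √b) * pellRoot a b r := by gcongr; linarith
    _ ≤ dominantTerm a b r y n :=
      one_sub_mul_pellRoot_le_dominantTerm hb (by linarith) (by nlinarith) hr hr2 hy hn

lemma div_dominantTerm_sq_le (ha : 0 ≤ a) (hb : 0 < b) (hab : 81 * a ≤ 16 * b) (hr : 0 < r)
    (hy : |y| = 2) :
    (1 - a / b) / dominantTerm a b r y n ^ 2 ≤ 2.6 / pellRoot a b r ^ (2 * n) := by
  have root_pos : 0 < pellRoot a b r := pellRoot_pos hr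
  have ratio_le : √a / √b ≤ 4 / 9 := sqrt_div_sqrt_le_four_ninths hb hab
  have lower := one_sub_mul_pellRoot_pow_le_dominantTerm (a := a) (b := b) (n := n) hr hy
  rw [← sqrt_div_sqrt_sq ha hb.le]
  set t := √a / √b
  have t_nonneg : 0 ≤ t := by positivity
  have one_sub_pos : 0 < 1 - t := by linarith
  have num_nonneg : 0 ≤ 1 - t ^ 2 := by nlinarith
  calc (1 - t ^ 2) / dominantTerm a b r y n ^ 2
      ≤ (1 - t ^ 2) / ((1 - t) * pellRoot a b r ^ n) ^ 2 := by gcongr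
    _ = (1 + t) / (1 - t) / pellRoot a b r ^ (2 * n) := by
      rw [pow_mul']
      field_simp
      ring
    _ ≤ 2.6 / pellRoot a b r ^ (2 * n) := by
      gcongr
      rw [div_le_iff₀ one_sub_pos]
      linarith

end DominantTerm

namespace IsTypeOneSeq

variable {a b r y : ℝ} {X : ℕ → ℝ}

lemma eq_leadCoeff_mul_pow_add (hX : IsTypeOneSeq a r y X) (ha : 0 ≤ a) (hb : 0 < b) (hr : 0 < r)
    (hr2 : r ^ 2 = a * b + 4) (n : ℕ) :
    X n = leadCoeff a b y * pellRoot a b r ^ n +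
      leadCoeff a b (-y) * (pellRoot a b r)⁻¹ ^ n := by
  have root_inv := inv_pellRoot (mul_nonneg ha hb.le) hr2
  have root_add_inv : pellRoot a b r + (pellRoot a b r)⁻¹ = r := by
    rw [root_inv, pellRoot]; ring
  have ratio_mul_sqrt : √a / √b * √(a * b) = a := by
    rw [sqrt_mul ha]
    field_simp
    exact sq_sqrt ha
  refine eq_add_of_recurrence ?_ ?_ (fun i ↦ ?_) n
  · rw [hX.zero, leadCoeff, leadCoeff]; ring
  · rw [root_inv, pellRoot, leadCoeff, leadCoeff]
    linear_combination hX.one / 2 - y / 2 * ratio_mul_sqrt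
  · rw [root_add_inv, mul_inv_cancel₀ (pellRoot_pos hr).ne', one_mul, hX.recurrence]

lemma eq_dominantTerm_add_div (hX : IsTypeOneSeq a r y X) (ha : 0 ≤ a) (hab : a < b) (hr : 0 < r)
    (hr2 : r ^ 2 = a * b + 4) (hy : |y| = 2) (n : ℕ) :
    X n = dominantTerm a b r y n + (1 - a / b) / dominantTerm a b r y n := by
  have hb : 0 < b := ha.trans_lt hab
  have coeff_pos := leadCoeff_pos hb hab hy
  rw [hX.eq_leadCoeff_mul_pow_add ha hb hr hr2, ← leadCoeff_mul_leadCoeff_neg ha hb.le hy,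
    dominantTerm, mul_div_mul_left _ _ coeff_pos.ne', inv_pow, div_eq_mul_inv]

end IsTypeOneSeq

section LinearForm

variable {a b c r s y z : ℝ} {l m : ℕ}

lemma log_dominantTerm_div_dominantTerm (ha : 0 < a) (hab : a < b) (hac : a < c) (hr : 0 < r)
    (hs : 0 < s) (hy : |y| = 2) (hz : |z| = 2) :
    log (dominantTerm a c s z m / dominantTerm a b r y l) =
      typeOneLinearForm a b c r s y z l m := by
  have hb : 0 < b := ha.trans hab
  have hc : 0 < c := ha.trans hac
  have coeff_div : √b * (z * √a + 2 * √c) / (√c * (y * √a + 2 * √b)) =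
      leadCoeff a c z / leadCoeff a b y := by
    have num_eq : z * √a + 2 * √c = 2 * √c * leadCoeff a c z := by
      unfold leadCoeff; field_simp; ring
    have den_eq : y * √a + 2 * √b = 2 * √b * leadCoeff a b y := by
      unfold leadCoeff; field_simp; ring
    rw [num_eq, den_eq]
    field_simp
  have coeff_b := (leadCoeff_pos hb hab hy).ne'
  have coeff_c := (leadCoeff_pos hc hac hz).ne'
  have pow_b := (pow_pos (pellRoot_pos (a := a) (b := b) hr) l).ne'
  have pow_c := (pow_pos (pellRoot_pos (a := a) (b := c) hs) m).ne'
  rw [typeOneLinearForm, coeff_div, dominantTerm, dominantTerm, log_div (mul_ne_zero coeff_c pow_c)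
    (mul_ne_zero coeff_b pow_b), log_mul coeff_c pow_c, log_mul coeff_b pow_b,
    log_div coeff_c coeff_b, log_pow, log_pow]
  ring

lemma one_sub_div_lt_dominantTerm_mul_dominantTerm (ha : 1 ≤ a) (hac : a < c)
    (hab : 81 * a ≤ 16 * b) (hr : 0 < r) (hr2 : r ^ 2 = a * b + 4) (hs : 0 < s)
    (hs2 : s ^ 2 = a * c + 4) (hy : |y| = 2) (hz : |z| = 2) (hl : 1 ≤ l) (hm : 1 ≤ m) :
    1 - a / c < dominantTerm a b r y l * dominantTerm a c s z m := by
  have hc : 0 < c := by linarith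
  have one_le_ac : 1 ≤ a * c := by nlinarith
  have ratio_sq : (√a / √c) ^ 2 = a / c := sqrt_div_sqrt_sq (by linarith) hc.le
  have ratio_lt : √a / √c < 1 := sqrt_div_sqrt_lt_one hc hac
  have one_sub_pos : 0 < 1 - √a / √c := sub_pos.2 ratio_lt
  calc 1 - a / c = (1 + √a / √c) * (1 - √a / √c) := by rw [← ratio_sq]; ring
    _ < 2 * (1 - √a / √c) := by gcongr; linarith
    _ = 5 / 4 * ((1 - √a / √c) * (8 / 5)) := by ring
    _ ≤ 5 / 4 * ((1 - √a / √c) * pellRoot a c s) := by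
      gcongr
      exact eight_fifths_le_pellRoot one_le_ac hs hs2
    _ ≤ dominantTerm a b r y l * dominantTerm a c s z m := by
      have p_ge := five_fourths_le_dominantTerm ha hab hr hr2 hy hl
      exact mul_le_mul p_ge
        (one_sub_mul_pellRoot_le_dominantTerm hc hac one_le_ac hs hs2 hz hm)
        (mul_pos one_sub_pos (pellRoot_pos hs)).le (by linarith)

theorem linear_form_bound_c1_minus_general {P Q : ℕ → ℝ} (ha : 1 ≤ a) (hac : a < c) (hcb : c < b)
    (hab : 81 * a ≤ 16 * b) (hr : 0 < r) (hr2 : r ^ 2 = a * b + 4) (hs : 0 < s)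
    (hs2 : s ^ 2 = a * c + 4) (hy : |y| = 2) (hz : |z| = 2) (hP : IsTypeOneSeq a r y P)
    (hQ : IsTypeOneSeq a s z Q) (hl : 1 ≤ l) (hm : 1 ≤ m) (heq : P l = Q m) :
    0 < typeOneLinearForm a b c r s y z l m ∧
      typeOneLinearForm a b c r s y z l m < 2.6 / pellRoot a b r ^ (2 * l) := by
  have ha0 : 0 < a := by linarith
  have hc : 0 < c := ha0.trans hac
  have a_lt_b : a < b := hac.trans hcb
  have hb : 0 < b := ha0.trans a_lt_b
  rw [← log_dominantTerm_div_dominantTerm ha0 a_lt_b hac hr hs hy hz]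
  have p_pos := dominantTerm_pos (n := l) hb a_lt_b hr hy
  have q_pos := dominantTerm_pos (n := m) hc hac hs hz
  have terms_eq : dominantTerm a b r y l + (1 - a / b) / dominantTerm a b r y l =
      dominantTerm a c s z m + (1 - a / c) / dominantTerm a c s z m := by
    rw [← hP.eq_dominantTerm_add_div ha0.le a_lt_b hr hr2 hy,
      ← hQ.eq_dominantTerm_add_div ha0.le hac hs hs2 hz, heq]
  have const_pos : 0 < 1 - a / c := sub_pos.2 ((div_lt_one hc).2 hac)
  have const_lt : 1 - a / c < 1 - a / b := by gcongr
  have p_lt_q := lt_of_add_div_eq_add_div p_pos q_pos const_lt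
    (one_sub_div_lt_dominantTerm_mul_dominantTerm ha hac hab hr hr2 hs hs2 hy hz hl hm) terms_eq
  exact ⟨log_pos ((one_lt_div p_pos).2 p_lt_q),
    (log_div_lt_of_add_div_eq_add_div p_pos q_pos const_pos terms_eq).trans_le
      (div_dominantTerm_sq_le ha0.le hb hab hr hy)⟩

end LinearForm

/-- For `k ∈ {7,8,10,11,12,13}`, `b = ka`, `c = c₁⁻ = a + b − 2r`, `s = r − a`, with a
solution of Type 1 (`x₂ = 2`, `y₂ = ±2`, `x₀ = 2`, `z₀ = ±2`): if `P_l = Q_m` with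
`l ≥ 1`, `m ≥ 1`, then `0 < Λ' < 2.6·α^{−2l}`, where
`Λ' = m·log β − l·log α + log γ'`. -/
theorem linear_form_bound_c1_minus
    (k a r b c s : ℤ)
    (hk : k ∈ ({7, 8, 10, 11, 12, 13} : Set ℤ)) (ha : 0 < a) (hr : 0 < r)
    (hr2 : k * a ^ 2 + 4 = r ^ 2) (hb : b = k * a) (hc : c = a + b - 2 * r)
    (hs : s = r - a) (hac : a < c) (hcb : c < b)
    (x₂ y₂ x₀ z₀ : ℤ)
    (hx₂ : x₂ = 2) (hy₂ : y₂ = 2 ∨ y₂ = -2) (hx₀ : x₀ = 2) (hz₀ : z₀ = 2 ∨ z₀ = -2)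
    (P Q : ℕ → ℤ)
    (hP0 : P 0 = x₂) (hP1 : 2 * P 1 = r * x₂ + a * y₂)
    (hPrec : ∀ i : ℕ, P (i + 2) = r * P (i + 1) - P i)
    (hQ0 : Q 0 = x₀) (hQ1 : 2 * Q 1 = s * x₀ + a * z₀)
    (hQrec : ∀ i : ℕ, Q (i + 2) = s * Q (i + 1) - Q i)
    (l m : ℕ)
    (α β γ' Λ' : ℝ)
    (hα : α = ((r : ℝ) + Real.sqrt ((a : ℝ) * (b : ℝ))) / 2)
    (hβ : β = ((s : ℝ) + Real.sqrt ((a : ℝ) * (c : ℝ))) / 2)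
    (hγ' : γ' = (Real.sqrt (b : ℝ) * ((z₀ : ℝ) * Real.sqrt (a : ℝ) + (x₀ : ℝ) * Real.sqrt (c : ℝ))) /
                (Real.sqrt (c : ℝ) * ((y₂ : ℝ) * Real.sqrt (a : ℝ) + (x₂ : ℝ) * Real.sqrt (b : ℝ))))
    (hΛ' : Λ' = (m : ℝ) * Real.log β - (l : ℝ) * Real.log α + Real.log γ')
    (hl : 1 ≤ l) (hm : 1 ≤ m) (heq : P l = Q m) :
    0 < Λ' ∧ Λ' < 2.6 / α ^ (2 * l) := by
  have seven_le_k : 7 ≤ k := by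
    simp only [Set.mem_insert_iff, Set.mem_singleton_iff] at hk
    lia
  have hab : 81 * a ≤ 16 * b := by rw [hb]; nlinarith
  have r_sq : r ^ 2 = a * b + 4 := by rw [hb]; linear_combination -hr2
  have s_sq : s ^ 2 = a * c + 4 := by rw [hs, hc]; linear_combination r_sq
  have s_pos : 0 < s := hs ▸ sub_pos.2 (lt_of_pow_lt_pow_left₀ 2 hr.le (by nlinarith))
  have abs_y : |y₂| = 2 := (abs_eq two_pos.le).2 hy₂
  have abs_z : |z₀| = 2 := (abs_eq two_pos.le).2 hz₀
  have one_le_a : 1 ≤ a := ha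
  subst hx₂ hx₀ hα hβ hγ' hΛ'
  have bounds : 0 < typeOneLinearForm a b c r s y₂ z₀ l m ∧
      typeOneLinearForm a b c r s y₂ z₀ l m < 2.6 / pellRoot a b r ^ (2 * l) := by
    apply linear_form_bound_c1_minus_general (hP := isTypeOneSeq_intCast hP0 hP1 hPrec)
      (hQ := isTypeOneSeq_intCast hQ0 hQ1 hQrec) (hl := hl) (hm := hm) <;> assumption_mod_cast
  simpa only [typeOneLinearForm, pellRoot, Int.cast_ofNat] using bounds
end

section
/- Let k ∈ {7, 8, 10, 11, 12, 13} and let a ≥ 10864 be a positive integer with k·a² + 4 = r² a perfect square. Set b = ka, c = a + b − 2r and s = r − a, and assume a < c < b. Consider a solution of Type 1, i.e. (x₂, y₂) = (2, ±2) and (x₀, z₀) = (2, ±2). If P_l = Q_m for some integers l ≥ 1 and m ≥ 1, then l ≤ m. -/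
/-!
Both recurrences have the form `u (n + 2) = q * u (n + 1) - u n`, so a positive solution grows by a
factor less than `q` at each step, and a positive monotone one by a factor of at least `q - 1`.
Since `s = r - a ≤ r - 1`, the sequence `Q` grows more slowly than `P`, and `Q 0 = 2 < P 1`
propagates to `Q n < P (n + 1)` for every `n`. As `P` is monotone, `P l = Q m < P (m + 1)` forces
`l ≤ m`.
-/

section Recurrence

variable {R : Type*} [CommRing R] [LinearOrder R] [IsStrictOrderedRing R] {q : R} {u : ℕ → R}

-- Taking `t > 1` allows a first step that decreases, as `Q` may do when `z₀ = -2`.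
theorem pos_and_le_mul_succ_of_recurrence {t : R} (ht : 0 < t) (hqt : 1 ≤ t * (q - t))
    (hrec : ∀ n, u (n + 2) = q * u (n + 1) - u n) (hu₀ : 0 < u 0) (hu₁ : u 0 ≤ t * u 1) (n : ℕ) :
    0 < u n ∧ u n ≤ t * u (n + 1) := by
  induction n with
  | zero => exact ⟨hu₀, hu₁⟩
  | succ n ih =>
    obtain ⟨hpos, hle⟩ := ih
    have hpos_succ : 0 < u (n + 1) := pos_of_mul_pos_right (hpos.trans_le hle) ht.le
    refine ⟨hpos_succ, ?_⟩
    calc u (n + 1) ≤ t * (q - t) * u (n + 1) := le_mul_of_one_le_left hpos_succ.le hqt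
      _ = t * (q * u (n + 1) - t * u (n + 1)) := by ring
      _ ≤ t * (q * u (n + 1) - u n) := by gcongr
      _ = t * u (n + 2) := by rw [hrec]

theorem monotone_of_recurrence_s12 (hq : 2 ≤ q)
    (hrec : ∀ n, u (n + 2) = q * u (n + 1) - u n) (hu₀ : 0 < u 0) (hu₁ : u 0 ≤ u 1) :
    Monotone u := by
  have h := pos_and_le_mul_succ_of_recurrence one_pos (by linarith) hrec hu₀ (by rwa [one_mul])
  exact monotone_nat_of_le_succ fun n => by simpa only [one_mul] using (h n).2

theorem succ_lt_mul_of_recurrence (hrec : ∀ n, u (n + 2) = q * u (n + 1) - u n)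
    (hpos : ∀ n, 0 < u n) (hu₁ : u 1 < q * u 0) : ∀ n, u (n + 1) < q * u n
  | 0 => hu₁
  | n + 1 => by rw [hrec]; exact sub_lt_self _ (hpos n)

theorem sub_one_mul_le_of_recurrence (hrec : ∀ n, u (n + 2) = q * u (n + 1) - u n)
    (hmono : Monotone u) (n : ℕ) : (q - 1) * u (n + 1) ≤ u (n + 2) := by
  rw [hrec, sub_one_mul]
  exact sub_le_sub_left (hmono n.le_succ) _

theorem lt_succ_of_recurrences {r s : R} {P Q : ℕ → R} (hsr : s ≤ r - 1)
    (hPrec : ∀ n, P (n + 2) = r * P (n + 1) - P n) (hPmono : Monotone P)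
    (hQrec : ∀ n, Q (n + 2) = s * Q (n + 1) - Q n) (hQpos : ∀ n, 0 < Q n)
    (hQ₁ : Q 1 < s * Q 0) (hQP : Q 0 < P 1) (n : ℕ) : Q n < P (n + 1) := by
  have hs : 0 < s := pos_of_mul_pos_left ((hQpos 1).trans hQ₁) (hQpos 0).le
  have hPpos (i : ℕ) : 0 < P (i + 1) :=
    ((hQpos 0).trans hQP).trans_le (hPmono (Nat.le_add_left 1 i))
  have hPgrowth (i : ℕ) : s * P (i + 1) ≤ P (i + 2) :=
    calc s * P (i + 1) ≤ (r - 1) * P (i + 1) := mul_le_mul_of_nonneg_right hsr (hPpos i).le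
      _ ≤ P (i + 2) := sub_one_mul_le_of_recurrence hPrec hPmono i
  exact (monotone_mul_left_of_nonneg hs.le).seq_lt_seq_of_lt_of_le (y := fun i => P (i + 1)) n hQP
    (fun i _ => succ_lt_mul_of_recurrence hQrec hQpos hQ₁ i) (fun i _ => hPgrowth i)

end Recurrence

theorem two_mul_lt_of_mul_add_four_eq_sq {a b r : ℤ} (ha : 0 < a) (hr : 0 < r)
    (hab : a * b + 4 = r ^ 2) (hrb : 2 * r < b) : 2 * a < r := by
  have : 2 * a * r < r * r := by nlinarith
  exact lt_of_mul_lt_mul_right this hr.le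

theorem three_le_sub_of_mul_add_four_eq_sq {a b r : ℤ} (ha : 0 < a) (hr : 0 < r)
    (hab : a * b + 4 = r ^ 2) (hrb : 2 * r < b) : 3 ≤ r - a := by
  have har := two_mul_lt_of_mul_add_four_eq_sq ha hr hab hrb
  obtain rfl | ha₂ : a = 1 ∨ 2 ≤ a := by omega
  · have : 4 ≤ r := by nlinarith
    linarith
  · linarith

theorem index_inequality_c1_minus_general {a b c r s y₂ z₀ : ℤ} (ha : 0 < a) (hr : 0 < r)
    (hab : a * b + 4 = r ^ 2) (hc : c = a + b - 2 * r) (hs : s = r - a) (hac : a < c)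
    (hy₂ : y₂ = 2 ∨ y₂ = -2) (hz₀ : z₀ = 2 ∨ z₀ = -2) {P Q : ℕ → ℤ}
    (hP₀ : P 0 = 2) (hP₁ : 2 * P 1 = r * 2 + a * y₂)
    (hPrec : ∀ i, P (i + 2) = r * P (i + 1) - P i)
    (hQ₀ : Q 0 = 2) (hQ₁ : 2 * Q 1 = s * 2 + a * z₀)
    (hQrec : ∀ i, Q (i + 2) = s * Q (i + 1) - Q i)
    {l m : ℕ} (heq : P l = Q m) : l ≤ m := by
  have hrb : 2 * r < b := by linarith
  have har : 2 * a < r := two_mul_lt_of_mul_add_four_eq_sq ha hr hab hrb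
  have hs₃ : 3 ≤ s := hs ▸ three_le_sub_of_mul_add_four_eq_sq ha hr hab hrb
  have hP₁_ge : s ≤ P 1 := by rcases hy₂ with rfl | rfl <;> linarith
  have hQ₁_pos : 1 ≤ Q 1 := by rcases hz₀ with rfl | rfl <;> linarith
  have hQ₁_lt : Q 1 < s * Q 0 := by rw [hQ₀]; rcases hz₀ with rfl | rfl <;> linarith
  have hPmono : Monotone P :=
    monotone_of_recurrence_s12 (by linarith) hPrec (by linarith) (by linarith)
  have hQpos (n : ℕ) : 0 < Q n :=
    (pos_and_le_mul_succ_of_recurrence two_pos (by linarith) hQrec (by linarith)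
      (by linarith) n).1
  have hlt : P l < P (m + 1) := heq ▸ lt_succ_of_recurrences (by linarith)
    hPrec hPmono hQrec hQpos hQ₁_lt (by linarith) m
  exact Nat.lt_succ_iff.mp (hPmono.reflect_lt hlt)

/-- For `k ∈ {7,8,10,11,12,13}`, `a ≥ 10864`, `b = ka`, `c = c₁⁻ = a + b − 2r`, `s = r − a`,
with a solution of Type 1: if `P_l = Q_m` with `l ≥ 1` and `m ≥ 1`, then `l ≤ m`. -/
theorem index_inequality_c1_minus
    (k a r b c s : ℤ)
    (hk : k ∈ ({7, 8, 10, 11, 12, 13} : Set ℤ)) (ha : 0 < a) (ha2 : 10864 ≤ a)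
    (hr : 0 < r) (hr2 : k * a ^ 2 + 4 = r ^ 2) (hb : b = k * a)
    (hc : c = a + b - 2 * r) (hs : s = r - a) (hac : a < c) (hcb : c < b)
    (x₂ y₂ x₀ z₀ : ℤ)
    (hx₂ : x₂ = 2) (hy₂ : y₂ = 2 ∨ y₂ = -2) (hx₀ : x₀ = 2) (hz₀ : z₀ = 2 ∨ z₀ = -2)
    (P Q : ℕ → ℤ)
    (hP0 : P 0 = x₂) (hP1 : 2 * P 1 = r * x₂ + a * y₂)
    (hPrec : ∀ i : ℕ, P (i + 2) = r * P (i + 1) - P i)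
    (hQ0 : Q 0 = x₀) (hQ1 : 2 * Q 1 = s * x₀ + a * z₀)
    (hQrec : ∀ i : ℕ, Q (i + 2) = s * Q (i + 1) - Q i)
    (l m : ℕ) (hl : 1 ≤ l) (hm : 1 ≤ m) (heq : P l = Q m) :
    l ≤ m := by
  subst hx₂ hx₀
  exact index_inequality_c1_minus_general ha hr (by rw [hb, ← hr2]; ring) hc hs hac hy₂ hz₀
    hP0 hP1 hPrec hQ0 hQ1 hQrec heq
end

section
/- Let k ∈ {7, 8, 10, 11, 12, 13} and let a ≥ 10864 be a positive integer with k·a² + 4 = r² a perfect square. Set b = ka and let c be one of c₁⁺ = a + b + 2r, c₂⁺ = (ab+4)(a+b+2r) − 4r, c₂⁻ = (ab+4)(a+b−2r) + 4r; let s, t be the positive integers with ac + 4 = s² and bc + 4 = t². If P_l = Q_m has a solution (l, m) (of Type 1 or Type 2) with m ≥ 3, then m ≤ l. -/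
/-!
The nonnegative sequence `P` grows at most geometrically with ratio `r`, while `Q`, once it is
increasing, grows at least geometrically with ratio `s - 1 ≥ r`. Since `P 0` and `P 1` are at most
`r + a`, it therefore suffices to show `r + a < Q 2`: then `P l < Q m` whenever `l < m` and `2 ≤ m`.

The bound `r + a < Q 2` is delicate only when `(x₀, z₀) = (r, -t)`, where `2 * Q 1 = s * r - a * t`
may be small. If `c = a + b + 2 * r`, then `s = r + a` and `t = r + b`, so `Q 1 = 2`; otherwise `s`
exceeds `2 * r + a`, and `Q 1 ≥ 1` is enough.
-/

section Recurrence

variable {R : Type*} [CommRing R] [LinearOrder R] [IsStrictOrderedRing R] {p q : R} {u v : ℕ → R}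

theorem monotone_of_recurrence_s13 (hp : 2 ≤ p) (hu : ∀ i, u (i + 2) = p * u (i + 1) - u i)
    (h0 : 0 ≤ u 0) (h01 : u 0 ≤ u 1) : Monotone u := by
  have nonneg_and_le_succ (n : ℕ) : 0 ≤ u n ∧ u n ≤ u (n + 1) := by
    induction n with
    | zero => exact ⟨h0, h01⟩
    | succ n ih =>
      obtain ⟨hn, hle⟩ := ih
      have hn' : 0 ≤ u (n + 1) := hn.trans hle
      refine ⟨hn', ?_⟩
      linarith [hu n, mul_le_mul_of_nonneg_right hp hn']
  exact monotone_nat_of_le_succ fun n ↦ (nonneg_and_le_succ n).2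

theorem nonneg_of_recurrence (hp : 2 ≤ p) (hu : ∀ i, u (i + 2) = p * u (i + 1) - u i)
    (h0 : 0 ≤ u 0) (h1 : 0 ≤ u 1) (h12 : u 1 ≤ u 2) : ∀ n, 0 ≤ u n
  | 0 => h0
  | n + 1 => by
    have hmono : Monotone fun i ↦ u (i + 1) :=
      monotone_of_recurrence_s13 hp (fun i ↦ hu (i + 1)) h1 h12
    exact h1.trans (hmono n.zero_le)

theorem le_mul_pow_of_recurrence (hp : 0 ≤ p) (hu : ∀ i, u (i + 2) = p * u (i + 1) - u i)
    (hnonneg : ∀ n, 0 ≤ u n) (n : ℕ) : u (n + 1) ≤ u 1 * p ^ n := by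
  induction n with
  | zero => simp
  | succ n ih =>
    calc u (n + 2) ≤ p * u (n + 1) := by linarith [hu n, hnonneg n]
      _ ≤ p * (u 1 * p ^ n) := mul_le_mul_of_nonneg_left ih hp
      _ = u 1 * p ^ (n + 1) := by ring

theorem mul_pow_le_of_recurrence (hq : 0 ≤ q) (hqp : q + 1 ≤ p)
    (hu : ∀ i, u (i + 2) = p * u (i + 1) - u i) (h0 : 0 ≤ u 0) (hmono : Monotone u) (n : ℕ) :
    u 1 * q ^ n ≤ u (n + 1) := by
  induction n with
  | zero => simp
  | succ n ih =>
    have hnonneg : 0 ≤ u (n + 1) := h0.trans (hmono (Nat.zero_le _))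
    calc u 1 * q ^ (n + 1) = q * (u 1 * q ^ n) := by ring
      _ ≤ q * u (n + 1) := mul_le_mul_of_nonneg_left ih hq
      _ ≤ u (n + 2) := by
        linarith [hu n, hmono n.le_succ, mul_le_mul_of_nonneg_right hqp hnonneg]

theorem lt_of_recurrence_of_lt_two (hp : 1 ≤ p) (hpq : p + 1 ≤ q)
    (hu : ∀ i, u (i + 2) = p * u (i + 1) - u i) (hv : ∀ i, v (i + 2) = q * v (i + 1) - v i)
    (hnonneg : ∀ n, 0 ≤ u n) (h0 : u 0 < v 2) (h1 : u 1 < v 2)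
    (hv1 : 0 ≤ v 1) (hv12 : v 1 ≤ v 2) {l n : ℕ} (hl : l ≤ n + 1) : u l < v (n + 2) := by
  have hv_tail (i : ℕ) : v (i + 2 + 1) = q * v (i + 1 + 1) - v (i + 1) := hv (i + 1)
  have hmono : Monotone fun i ↦ v (i + 1) :=
    monotone_of_recurrence_s13 (by linarith) hv_tail hv1 hv12
  have hp0 : 0 < p := by linarith
  cases l with
  | zero => exact h0.trans_le (hmono (Nat.le_add_left 1 n))
  | succ j =>
    calc u (j + 1) ≤ u 1 * p ^ j := le_mul_pow_of_recurrence hp0.le hu hnonneg j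
      _ < v 2 * p ^ j := by gcongr
      _ ≤ v (j + 2) := mul_pow_le_of_recurrence hp0.le hpq hv_tail hv1 hmono j
      _ ≤ v (n + 2) := hmono hl

end Recurrence

section Triple

variable {a b c r s t : ℤ}

theorem lt_of_mul_add_four_eq_sq (ha : 0 < a) (hab : a < b) (hr : 0 < r)
    (hr2 : a * b + 4 = r ^ 2) : a < r :=
  lt_of_pow_lt_pow_left₀ 2 hr.le (by nlinarith)

theorem three_le_of_mul_add_four_eq_sq (ha : 0 < a) (hab : a < b) (hr : 0 < r)
    (hr2 : a * b + 4 = r ^ 2) : 3 ≤ r := by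
  have hlt : (2 : ℤ) < r := lt_of_pow_lt_pow_left₀ 2 hr.le (by nlinarith)
  exact hlt

theorem two_mul_lt_add_of_mul_add_four_eq_sq (ha : 0 < a) (hab : a + 4 < b)
    (hr2 : a * b + 4 = r ^ 2) : 2 * r < a + b :=
  lt_of_pow_lt_pow_left₀ 2 (by linarith) (by nlinarith)

theorem eq_add_of_mul_add_add_two_mul_add_four_eq_sq (ha : 0 ≤ a) (hr : 0 ≤ r) (hs : 0 ≤ s)
    (hr2 : a * b + 4 = r ^ 2) (hs2 : a * (a + b + 2 * r) + 4 = s ^ 2) : s = r + a :=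
  (pow_left_inj₀ hs (add_nonneg hr ha) two_ne_zero).1 (by linarith)

-- The sign of `r` is free, so this covers both `c₂⁺` and `c₂⁻`.
theorem mul_c₂_add_four_eq_sq (hr2 : a * b + 4 = r ^ 2) :
    a * ((a * b + 4) * (a + b + 2 * r) - 4 * r) + 4 = (r * (r + a) - 2) ^ 2 := by
  linear_combination (a * (a + b + 2 * r) + r ^ 2) * hr2

theorem two_mul_add_lt_of_c₂_plus (ha : 0 < a) (hr : 3 ≤ r) (hs : 0 ≤ s)
    (hr2 : a * b + 4 = r ^ 2)
    (hs2 : a * ((a * b + 4) * (a + b + 2 * r) - 4 * r) + 4 = s ^ 2) : 2 * r + a < s := by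
  have hs_eq : s = r * (r + a) - 2 :=
    (pow_left_inj₀ hs (by nlinarith) two_ne_zero).1 (hs2.symm.trans (mul_c₂_add_four_eq_sq hr2))
  nlinarith

theorem two_mul_add_lt_of_c₂_minus (ha : 0 < a) (har : a + 2 < r) (hs : 0 ≤ s)
    (hr2 : a * b + 4 = r ^ 2)
    (hs2 : a * ((a * b + 4) * (a + b - 2 * r) + 4 * r) + 4 = s ^ 2) : 2 * r + a < s := by
  have hs_sq : s ^ 2 = (r * (r - a) - 2) ^ 2 := by
    have hneg := mul_c₂_add_four_eq_sq (r := -r) (hr2.trans (neg_sq r).symm)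
    linear_combination hneg - hs2
  have hs_eq : s = r * (r - a) - 2 :=
    (pow_left_inj₀ hs (by nlinarith) two_ne_zero).1 hs_sq
  nlinarith

-- Only `{3, 4}` has `r = a + 1`, and then `c₂⁻ = 0`; if `r = a + 2`, then `b = a + 4`.
theorem c₂_minus_eq_c₁_plus (ha : 0 < a) (hab : a < b) (har : a < r) (hra : r ≤ a + 2)
    (hr2 : a * b + 4 = r ^ 2) (hc0 : 0 < (a * b + 4) * (a + b - 2 * r) + 4 * r) :
    (a * b + 4) * (a + b - 2 * r) + 4 * r = a + b + 2 * r := by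
  obtain rfl | rfl : r = a + 1 ∨ r = a + 2 := by omega
  · have hb : b = a + 1 := by nlinarith
    have ha3 : a = 3 := by subst hb; linarith
    subst ha3 hb
    norm_num at hc0
  · have hb : b = a + 4 := mul_left_cancel₀ ha.ne' (by linarith)
    subst hb
    ring

theorem eq_c₁_plus_or_two_mul_add_lt (ha : 0 < a) (hab : a < b) (hr : 0 < r)
    (hr2 : a * b + 4 = r ^ 2) (hc0 : 0 < c)
    (hc : c = a + b + 2 * r ∨ c = (a * b + 4) * (a + b + 2 * r) - 4 * r ∨
      c = (a * b + 4) * (a + b - 2 * r) + 4 * r)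
    (hs : 0 ≤ s) (hs2 : a * c + 4 = s ^ 2) :
    c = a + b + 2 * r ∨ 2 * r + a < s := by
  rcases hc with hc₁ | rfl | rfl
  · exact .inl hc₁
  · exact .inr (two_mul_add_lt_of_c₂_plus ha (three_le_of_mul_add_four_eq_sq ha hab hr hr2)
      hs hr2 hs2)
  · rcases le_or_gt r (a + 2) with hra | hra
    · exact .inl (c₂_minus_eq_c₁_plus ha hab (lt_of_mul_add_four_eq_sq ha hab hr hr2) hra hr2 hc0)
    · exact .inr (two_mul_add_lt_of_c₂_minus ha hra hs hr2 hs2)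

theorem add_le_of_eq_c₁_plus_or_two_mul_add_lt (ha : 0 ≤ a) (hr : 0 ≤ r)
    (hr2 : a * b + 4 = r ^ 2) (hs : 0 ≤ s) (hs2 : a * c + 4 = s ^ 2)
    (hc : c = a + b + 2 * r ∨ 2 * r + a < s) : r + a ≤ s := by
  rcases hc with rfl | hs_gt
  · exact (eq_add_of_mul_add_add_two_mul_add_four_eq_sq ha hr hs hr2 hs2).ge
  · linarith

theorem pos_of_eq_c₁_plus_or_eq_c₂ (ha : 0 < a) (hab : a + 4 < b) (hr : 0 < r)
    (hr2 : a * b + 4 = r ^ 2)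
    (hc : c = a + b + 2 * r ∨ c = (a * b + 4) * (a + b + 2 * r) - 4 * r ∨
      c = (a * b + 4) * (a + b - 2 * r) + 4 * r) : 0 < c := by
  have hb : 0 < b := by linarith
  rcases hc with rfl | rfl | rfl
  · positivity
  · have hpos : 0 < a * b * (a + b + 2 * r) := by positivity
    linarith
  · have hd : 0 < a + b - 2 * r := sub_pos.2 (two_mul_lt_add_of_mul_add_four_eq_sq ha hab hr2)
    positivity

theorem mul_lt_mul_of_mul_add_four_eq_sq (ha : 0 ≤ a) (hab : a ≤ b) (hc : 0 ≤ c)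
    (hr : 0 ≤ r) (hs : 0 ≤ s) (hr2 : a * b + 4 = r ^ 2) (hs2 : a * c + 4 = s ^ 2)
    (ht2 : b * c + 4 = t ^ 2) : a * t < s * r := by
  have hdiff : (s * r) ^ 2 - (a * t) ^ 2 = 4 * (a * c + a * (b - a) + 4) := by
    rw [mul_pow, mul_pow, ← hs2, ← hr2, ← ht2]
    ring
  have hpos : 0 < a * c + a * (b - a) + 4 := by
    have := sub_nonneg.2 hab
    positivity
  exact lt_of_pow_lt_pow_left₀ 2 (by positivity) (by linarith)

end Triple

section InitialValues

variable {a b c r s t q₀ q₁ : ℤ}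

theorem two_le_of_type_one (ha : 0 < a) (hr : 2 ≤ r) (hs : r + a ≤ s) {z₀ : ℤ}
    (hz₀ : z₀ = 2 ∨ z₀ = -2) (hq₁ : 2 * q₁ = s * 2 + a * z₀) : 2 ≤ q₁ := by
  rcases hz₀ with rfl | rfl <;> linarith

theorem pos_and_two_le_or_of_type_two (ha : 0 < a) (hab : a < b) (hc0 : 0 < c)
    (hr : 3 ≤ r) (hr2 : a * b + 4 = r ^ 2) (hs : 0 < s) (hs2 : a * c + 4 = s ^ 2)
    (ht : 0 < t) (ht2 : b * c + 4 = t ^ 2) (hc : c = a + b + 2 * r ∨ 2 * r + a < s)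
    {z₀ : ℤ} (hz₀ : z₀ = t ∨ z₀ = -t) (hq₁ : 2 * q₁ = s * r + a * z₀) :
    0 < q₁ ∧ (2 ≤ q₁ ∨ 2 * r + a < s) := by
  have hlt : a * t < s * r :=
    mul_lt_mul_of_mul_add_four_eq_sq ha.le hab.le hc0.le (by linarith) hs.le hr2 hs2 ht2
  have hat : 0 < a * t := mul_pos ha ht
  rcases hz₀ with rfl | rfl
  · have hsr : 3 ≤ s * r := by nlinarith
    have hq₁_ge : 2 ≤ q₁ := by omega
    exact ⟨by linarith, .inl hq₁_ge⟩
  · refine ⟨by linarith, hc.imp_left fun hc₁ ↦ ?_⟩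
    subst hc₁
    have hs_eq : s = r + a :=
      eq_add_of_mul_add_add_two_mul_add_four_eq_sq ha.le (by linarith) hs.le hr2 hs2
    have ht_eq : t = r + b :=
      eq_add_of_mul_add_add_two_mul_add_four_eq_sq (a := b) (b := a) (by linarith) (by linarith)
        ht.le (by linarith) (by linarith)
    subst hs_eq ht_eq
    linarith

theorem le_and_lt_mul_sub (ha : 0 < a) (hr : 0 ≤ r) (hs : r + a ≤ s) (hq₀ : q₀ ≤ r)
    (hq₁ : 0 < q₁) (hlarge : 2 ≤ q₁ ∨ 2 * r + a < s) :
    q₁ ≤ s * q₁ - q₀ ∧ r + a < s * q₁ - q₀ := by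
  have hprod : 0 ≤ (s - 1) * (q₁ - 1) := mul_nonneg (by linarith) (by linarith)
  refine ⟨by linarith, ?_⟩
  rcases hlarge with hq₁_ge | hs_gt
  · have hs_double : s * 2 ≤ s * q₁ := mul_le_mul_of_nonneg_left hq₁_ge (by linarith)
    linarith
  · linarith

theorem pos_and_le_and_add_lt_of_type_one_or_two {Q : ℕ → ℤ} {x₀ z₀ : ℤ} (ha : 0 < a) (hab : a < b)
    (hc0 : 0 < c) (hr : 3 ≤ r) (hr2 : a * b + 4 = r ^ 2) (hs : 0 < s) (hs2 : a * c + 4 = s ^ 2)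
    (ht : 0 < t) (ht2 : b * c + 4 = t ^ 2) (hc : c = a + b + 2 * r ∨ 2 * r + a < s)
    (htype : (x₀ = 2 ∧ (z₀ = 2 ∨ z₀ = -2)) ∨ (x₀ = r ∧ (z₀ = t ∨ z₀ = -t)))
    (hQ0 : Q 0 = x₀) (hQ1 : 2 * Q 1 = s * x₀ + a * z₀) (hQ2 : Q 2 = s * Q 1 - Q 0) :
    0 < Q 1 ∧ Q 1 ≤ Q 2 ∧ r + a < Q 2 := by
  have hsr : r + a ≤ s :=
    add_le_of_eq_c₁_plus_or_two_mul_add_lt ha.le (by linarith) hr2 hs.le hs2 hc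
  have hQ0_le : Q 0 ≤ r := by rcases htype with ⟨h, -⟩ | ⟨h, -⟩ <;> linarith
  obtain ⟨hQ1_pos, hlarge⟩ : 0 < Q 1 ∧ (2 ≤ Q 1 ∨ 2 * r + a < s) := by
    rcases htype with ⟨rfl, hz₀⟩ | ⟨rfl, hz₀⟩
    · have hQ1_ge : 2 ≤ Q 1 := two_le_of_type_one ha (by linarith) hsr hz₀ hQ1
      exact ⟨by linarith, .inl hQ1_ge⟩
    · exact pos_and_two_le_or_of_type_two ha hab hc0 hr hr2 hs hs2 ht ht2 hc hz₀ hQ1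
  exact ⟨hQ1_pos, hQ2 ▸ le_and_lt_mul_sub ha (by linarith) hsr hQ0_le hQ1_pos hlarge⟩

end InitialValues

theorem index_inequality_c1_plus_c2_general {a b c r s t : ℤ} (ha : 0 < a) (hab : a < b)
    (hr : 0 < r) (hr2 : a * b + 4 = r ^ 2) (hc0 : 0 < c)
    (hc : c = a + b + 2 * r ∨ c = (a * b + 4) * (a + b + 2 * r) - 4 * r ∨
      c = (a * b + 4) * (a + b - 2 * r) + 4 * r)
    (hs : 0 < s) (hs2 : a * c + 4 = s ^ 2) (ht : 0 < t) (ht2 : b * c + 4 = t ^ 2)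
    {y₂ x₀ z₀ : ℤ} (hy₂ : y₂ = 2 ∨ y₂ = -2)
    (htype : (x₀ = 2 ∧ (z₀ = 2 ∨ z₀ = -2)) ∨ (x₀ = r ∧ (z₀ = t ∨ z₀ = -t)))
    {P Q : ℕ → ℤ} (hP0 : P 0 = 2) (hP1 : 2 * P 1 = r * 2 + a * y₂)
    (hPrec : ∀ i : ℕ, P (i + 2) = r * P (i + 1) - P i)
    (hQ0 : Q 0 = x₀) (hQ1 : 2 * Q 1 = s * x₀ + a * z₀)
    (hQrec : ∀ i : ℕ, Q (i + 2) = s * Q (i + 1) - Q i)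
    {l m : ℕ} (hm : 2 ≤ m) (heq : P l = Q m) : m ≤ l := by
  have har : a < r := lt_of_mul_add_four_eq_sq ha hab hr hr2
  have hr3 : 3 ≤ r := three_le_of_mul_add_four_eq_sq ha hab hr hr2
  have hc' : c = a + b + 2 * r ∨ 2 * r + a < s :=
    eq_c₁_plus_or_two_mul_add_lt ha hab hr hr2 hc0 hc hs.le hs2
  have hsr : r + a ≤ s := add_le_of_eq_c₁_plus_or_two_mul_add_lt ha.le hr.le hr2 hs.le hs2 hc'
  obtain ⟨hQ1_pos, hQ12, hQ2⟩ : 0 < Q 1 ∧ Q 1 ≤ Q 2 ∧ r + a < Q 2 :=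
    pos_and_le_and_add_lt_of_type_one_or_two ha hab hc0 hr3 hr2 hs hs2 ht ht2 hc' htype
      hQ0 hQ1 (hQrec 0)
  obtain ⟨hP1_pos, hP1_le⟩ : 0 < P 1 ∧ P 1 ≤ r + a := by
    rcases hy₂ with rfl | rfl <;> constructor <;> linarith
  have hP12 : P 1 ≤ P 2 := by nlinarith [hPrec 0]
  have hP_nonneg : ∀ n, 0 ≤ P n :=
    nonneg_of_recurrence (by linarith) hPrec (by linarith) hP1_pos.le hP12
  by_contra! hlm
  obtain ⟨n, rfl⟩ := Nat.exists_eq_add_of_le' hm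
  exact (lt_of_recurrence_of_lt_two (by linarith) (by linarith) hPrec hQrec hP_nonneg
    (by linarith) (by linarith) hQ1_pos.le hQ12 (Nat.le_of_lt_succ hlm)).ne heq

/-- For `k ∈ {7,8,10,11,12,13}`, `a ≥ 10864`, `b = ka` and `c ∈ {c₁⁺, c₂⁺, c₂⁻}`: if
`P_l = Q_m` has a solution `(l, m)` of Type 1 or Type 2 with `m ≥ 3`, then `m ≤ l`. -/
theorem index_inequality_c1_plus_c2
    (k a r b c s t : ℤ)
    (hk : k ∈ ({7, 8, 10, 11, 12, 13} : Set ℤ)) (ha : 0 < a) (ha2 : 10864 ≤ a)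
    (hr : 0 < r) (hr2 : k * a ^ 2 + 4 = r ^ 2) (hb : b = k * a)
    (hc : c = a + b + 2 * r ∨ c = (a * b + 4) * (a + b + 2 * r) - 4 * r ∨
          c = (a * b + 4) * (a + b - 2 * r) + 4 * r)
    (hs : 0 < s) (hs2 : a * c + 4 = s ^ 2) (ht : 0 < t) (ht2 : b * c + 4 = t ^ 2)
    (x₂ y₂ x₀ z₀ : ℤ)
    (hx₂ : x₂ = 2) (hy₂ : y₂ = 2 ∨ y₂ = -2)
    (htype : (x₀ = 2 ∧ (z₀ = 2 ∨ z₀ = -2)) ∨ (x₀ = r ∧ (z₀ = t ∨ z₀ = -t)))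
    (P Q : ℕ → ℤ)
    (hP0 : P 0 = x₂) (hP1 : 2 * P 1 = r * x₂ + a * y₂)
    (hPrec : ∀ i : ℕ, P (i + 2) = r * P (i + 1) - P i)
    (hQ0 : Q 0 = x₀) (hQ1 : 2 * Q 1 = s * x₀ + a * z₀)
    (hQrec : ∀ i : ℕ, Q (i + 2) = s * Q (i + 1) - Q i)
    (l m : ℕ) (hm : 3 ≤ m) (heq : P l = Q m) :
    m ≤ l := by
  have hk7 : 7 ≤ k := by rcases hk with rfl | rfl | rfl | rfl | rfl | rfl <;> norm_num
  have hab : a + 4 < b := by nlinarith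
  have hr2' : a * b + 4 = r ^ 2 := by rw [← hr2, hb]; ring
  have hc0 : 0 < c := pos_of_eq_c₁_plus_or_eq_c₂ ha hab hr hr2' hc
  subst hx₂
  exact index_inequality_c1_plus_c2_general ha (by linarith) hr hr2' hc0 hc hs hs2 ht ht2 hy₂ htype
    hP0 hP1 hPrec hQ0 hQ1 hQrec (by omega) heq
end
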